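/- arXiv:2110.07397 — 2 statements merged into one kernel-verified Lean document; each statement's English description precedes it below -/
import Mathlib

section
/- Fix integers 1 ≤ p < n. The initial subalgebra in_{<_pbw}(𝒫) of the Plücker algebra is isomorphic to the generalized Hibi ring A_{∅,Q}(Q,≺) as an ℕ₀-graded algebra, via the isomorphism sending in_{<_pbw}(D_I) to s·y^{v_{∅,Q}(φ_pbw(I))} for every PBW tuple I (where 𝒫 is graded by assigning degree 1 to each D_I and A_{∅,Q}(Q,≺) by degree in s). The inverse isomorphism is given by y_{q_{i,j}} ↦ z_{i,j}·z_{i,i}^{−1} and s ↦ z_{1,1}⋯z_{p,p}. -/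
open scoped Classical

noncomputable section

open MvPolynomial

/-- The initial (leading) term of `f` with respect to the strict monomial order `lt`:
the term of `f` whose monomial is `lt`-maximal in the support (or `0` if none exists). -/
def initTerm {σ : Type*} (lt : (σ →₀ ℕ) → (σ →₀ ℕ) → Prop)
    (f : MvPolynomial σ ℂ) : MvPolynomial σ ℂ :=
  if h : ∃ m, m ∈ f.support ∧ ∀ m' ∈ f.support, m' ≠ m → lt m' m
  then monomial h.choose (coeff h.choose f)
  else 0

/-- The initial subalgebra of `A` (as a ℂ-submodule): the span of the
initial terms of elements of `A`. -/
def initSpan {σ : Type*} (lt : (σ →₀ ℕ) → (σ →₀ ℕ) → Prop)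
    (A : Subalgebra ℂ (MvPolynomial σ ℂ)) : Submodule ℂ (MvPolynomial σ ℂ) :=
  Submodule.span ℂ (initTerm lt '' (A : Set (MvPolynomial σ ℂ)))

/-- The degree reverse lexicographic order on monomials, where the variables are
enumerated according to `rank`: `a < b` iff `deg a < deg b`, or the degrees agree and
at the last (highest-rank) variable where `a` and `b` differ, `a` has the larger exponent. -/
def degRevLex {σ : Type*} (rank : σ → ℕ) (a b : σ →₀ ℕ) : Prop :=
  (a.sum fun _ e => e) < (b.sum fun _ e => e) ∨
    ((a.sum fun _ e => e) = (b.sum fun _ e => e) ∧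
      ∃ i, b i < a i ∧ ∀ j, rank i < rank j → a j = b j)
/-- The Plücker minor `D_I`: the determinant of the `p×p` matrix whose `j`-th column
is the `α j`-th column of the generic `p×n` matrix of variables `z_{i,j}`. -/
def Dmin (p n : ℕ) (α : Fin p → Fin n) : MvPolynomial (Fin p × Fin n) ℂ :=
  (Matrix.of fun i j : Fin p => (X (i, α j) : MvPolynomial (Fin p × Fin n) ℂ)).det

/-- The Plücker algebra `𝒫`: the subalgebra generated by all minors `D_I`. -/
def Pluecker (p n : ℕ) : Subalgebra ℂ (MvPolynomial (Fin p × Fin n) ℂ) :=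
  Algebra.adjoin ℂ (Set.range (Dmin p n))

/-- `α` is a PBW tuple (0-indexed version): the entries are pairwise distinct, entries
`< p` stand at the position equal to their value, and entries `≥ p` appear in
decreasing order. -/
def IsPBW (p n : ℕ) (α : Fin p → Fin n) : Prop :=
  Function.Injective α ∧ (∀ j : Fin p, (α j : ℕ) < p → (α j : ℕ) = (j : ℕ)) ∧
    ∀ j k : Fin p, p ≤ (α k : ℕ) → (α k : ℕ) < (α j : ℕ) → j < k

/-- The position of the variable `z_{i,j}` in the PBW ordering of the variables: first
by row, then cyclically within the `i`-th row starting with `z_{i,i}`. -/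
def rankPBW (p n : ℕ) (x : Fin p × Fin n) : ℕ :=
  (x.1 : ℕ) * n + ((x.2 : ℕ) + n - (x.1 : ℕ)) % n
/-- The poset `Q`: elements `q_{i,j}` with `1 ≤ i ≤ p` and `p+1 ≤ j ≤ n`. -/
abbrev Qfin (p n : ℕ) := {x : ℕ × ℕ // 1 ≤ x.1 ∧ x.1 ≤ p ∧ p + 1 ≤ x.2 ∧ x.2 ≤ n}

/-- The order on `Q`: `q_{i₁,j₁} ⪯ q_{i₂,j₂}` iff `i₁ ≤ i₂` and `j₁ ≤ j₂`. -/
def qleF (p n : ℕ) (a b : Qfin p n) : Prop :=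
  a.val.1 ≤ b.val.1 ∧ a.val.2 ≤ b.val.2

/-- The order ideal `φ_pbw(I)` of `Q`: for a PBW tuple `α` it is the order ideal
generated by the antichain `L = {q_{j,α_j} : α_j > p}` (i.e. the unique order ideal
whose set of maximal elements is `L`). -/
def phiPBWset (p n : ℕ) (α : Fin p → Fin n) : Set (Qfin p n) :=
  {q | ∃ j : Fin p, p ≤ (α j : ℕ) ∧ q.val.1 ≤ (j : ℕ) + 1 ∧ q.val.2 ≤ (α j : ℕ) + 1}

/-- The generator `s · y^{v_{∅,Q}(J)}` of the generalized Hibi ring `A_{∅,Q}(Q,≺)`: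
here `v_{∅,Q}(J)` is the indicator vector of the set of maximal elements of `J`. -/
def genQ (p n : ℕ) (J : Finset (Qfin p n)) : MvPolynomial (Option (Qfin p n)) ℂ :=
  monomial (Finsupp.single (none : Option (Qfin p n)) 1 +
    ∑ q ∈ J, if (∀ q' ∈ J, ¬ (qleF p n q q' ∧ q ≠ q'))
      then Finsupp.single (some q) 1 else 0) 1

/-- The generalized Hibi ring `A_{∅,Q}(Q,≺)`. -/
def hibiQ (p n : ℕ) : Subalgebra ℂ (MvPolynomial (Option (Qfin p n)) ℂ) :=
  Algebra.adjoin ℂ {f | ∃ J : Finset (Qfin p n),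
    (∀ a ∈ J, ∀ b, qleF p n b a → b ∈ J) ∧ f = genQ p n J}

/-- The row index of `q_{i,j} ∈ Q` as an element of `Fin p`. -/
def rowOf (p n : ℕ) (q : Qfin p n) : Fin p :=
  ⟨q.val.1 - 1, by obtain ⟨h1, h2, h3, h4⟩ := q.property; omega⟩

/-- The column index of `q_{i,j} ∈ Q` as an element of `Fin n`. -/
def colOf (p n : ℕ) (q : Qfin p n) : Fin n :=
  ⟨q.val.2 - 1, by obtain ⟨h1, h2, h3, h4⟩ := q.property; omega⟩

/-- The row index of `q_{i,j} ∈ Q` viewed as a column index (for `z_{i,i}`). -/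
def diagColOf (p n : ℕ) (q : Qfin p n) : Fin n :=
  ⟨q.val.1 - 1, by obtain ⟨h1, h2, h3, h4⟩ := q.property; omega⟩

theorem initTerm_eq_monomial {σ : Type*} {lt : (σ →₀ ℕ) → (σ →₀ ℕ) → Prop}
    (hlt : ∀ a b, lt a b → ¬ lt b a) {f : MvPolynomial σ ℂ} {m : σ →₀ ℕ}
    (hm : m ∈ f.support) (hmax : ∀ m' ∈ f.support, m' ≠ m → lt m' m) :
    initTerm lt f = monomial m (coeff m f) := by
  have h : ∃ m, m ∈ f.support ∧ ∀ m' ∈ f.support, m' ≠ m → lt m' m := ⟨m, hm, hmax⟩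
  have heq : h.choose = m := by
    by_contra hne
    exact hlt _ _ (hmax _ h.choose_spec.1 hne) (h.choose_spec.2 m hm (Ne.symm hne))
  rw [initTerm, dif_pos h, heq]

theorem degRevLex_asymm {σ : Type*} {rank : σ → ℕ} (hrank : Function.Injective rank)
    (a b : σ →₀ ℕ) (hab : degRevLex rank a b) : ¬ degRevLex rank b a := by
  intro hba
  rcases hab with h | ⟨h, i, hi, hi'⟩ <;> rcases hba with h' | ⟨h', j, hj, hj'⟩
  · omega
  · omega
  · omega
  · rcases lt_trichotomy (rank i) (rank j) with hij | hij | hij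
    · have := hi' j hij; omega
    · have := hrank hij; subst this; omega
    · have := hj' i hij; omega

theorem sum_exponents_add {σ : Type*} (a b : σ →₀ ℕ) :
    ((a + b).sum fun _ e => e) = (a.sum fun _ e => e) + b.sum fun _ e => e :=
  Finsupp.sum_add_index' (fun _ => rfl) fun _ _ _ => rfl

theorem degRevLex_add_left {σ : Type*} {rank : σ → ℕ} {a b : σ →₀ ℕ} (c : σ →₀ ℕ)
    (h : degRevLex rank a b) : degRevLex rank (c + a) (c + b) := by
  unfold degRevLex at h ⊢
  simp only [sum_exponents_add, Finsupp.add_apply]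
  rcases h with h | ⟨h, i, hi, hi'⟩
  · exact Or.inl (by omega)
  · exact Or.inr ⟨by omega, i, by omega, fun j hj => by rw [hi' j hj]⟩

theorem degRevLex_of_exchange {σ : Type*} {rank : σ → ℕ} {m m' : σ →₀ ℕ} {x₁ x₂ y₁ y₂ : σ}
    (h : m' + Finsupp.single x₁ 1 + Finsupp.single x₂ 1 =
      m + Finsupp.single y₁ 1 + Finsupp.single y₂ 1)
    (hx₂ : rank x₂ < rank x₁) (hy₁ : rank y₁ < rank x₁) (hy₂ : rank y₂ < rank x₁) :
    degRevLex rank m m' := by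
  refine Or.inr ⟨?_, x₁, ?_, fun j hj => ?_⟩
  · have := congrArg (fun a : σ →₀ ℕ => a.sum fun _ e => e) h
    simp only [sum_exponents_add, Finsupp.sum_single_index] at this
    omega
  · have := DFunLike.congr_fun h x₁
    have h1 : y₁ ≠ x₁ := by rintro rfl; omega
    have h2 : y₂ ≠ x₁ := by rintro rfl; omega
    simp [Finsupp.single_apply, h1, h2] at this
    split_ifs at this <;> omega
  · have := DFunLike.congr_fun h j
    have h1 : y₁ ≠ j := by rintro rfl; omega
    have h2 : y₂ ≠ j := by rintro rfl; omega
    have h3 : x₁ ≠ j := by rintro rfl; omega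
    have h4 : x₂ ≠ j := by rintro rfl; omega
    simp [h1, h2, h3, h4] at this
    omega

theorem rankPBW_lt_of_row_lt {p n : ℕ} {i j : Fin p} (c d : Fin n) (hij : i < j) :
    rankPBW p n (i, c) < rankPBW p n (j, d) := by
  have hn : 0 < n := c.pos
  have h1 := Nat.mod_lt ((c : ℕ) + n - i) hn
  have h2 : ((i : ℕ) + 1) * n ≤ j * n := Nat.mul_le_mul_right _ hij
  simp only [rankPBW]
  linarith [Nat.zero_le (((d : ℕ) + n - j) % n)]

theorem rankPBW_eq {p n : ℕ} (hpn : p < n) (i : Fin p) (c : Fin n) :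
    rankPBW p n (i, c) = i * n + if (i : ℕ) ≤ c then (c : ℕ) - i else c + n - i := by
  have := i.2
  have := c.2
  simp only [rankPBW]
  split_ifs with h
  · rw [show (c : ℕ) + n - i = (c - i) + n by omega, Nat.add_mod_right, Nat.mod_eq_of_lt (by omega)]
  · rw [Nat.mod_eq_of_lt (by omega)]

theorem rankPBW_injective {p n : ℕ} (hpn : p < n) : Function.Injective (rankPBW p n) := by
  rintro ⟨i, c⟩ ⟨j, d⟩ h
  rcases lt_trichotomy i j with hij | rfl | hij
  · exact absurd h (rankPBW_lt_of_row_lt c d hij).ne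
  · have := i.2
    have := c.2
    have := d.2
    rw [rankPBW_eq hpn, rankPBW_eq hpn] at h
    have : c = d := by
      ext
      split_ifs at h <;> omega
    rw [this]
  · exact absurd h (rankPBW_lt_of_row_lt d c hij).ne'

/-- The exponent vector of `∏ i, z_{i, α i}`. -/
def graphExp (p n : ℕ) (α : Fin p → Fin n) : Fin p × Fin n →₀ ℕ :=
  ∑ i, Finsupp.single (i, α i) 1

theorem graphExp_apply {p n : ℕ} (α : Fin p → Fin n) (i : Fin p) (c : Fin n) :
    graphExp p n α (i, c) = if α i = c then 1 else 0 := by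
  simp only [graphExp, Finsupp.finsetSum_apply, Finsupp.single_apply, Prod.mk.injEq]
  rw [Finset.sum_eq_single i] <;> simp +contextual

theorem sum_exponents_graphExp {p n : ℕ} (α : Fin p → Fin n) :
    ((graphExp p n α).sum fun _ e => e) = p := by
  rw [Finsupp.sum_fintype _ _ fun _ => rfl, Fintype.sum_prod_type]
  simp [graphExp_apply]

theorem Dmin_eq_sum {p n : ℕ} (α : Fin p → Fin n) :
    Dmin p n α = ∑ σ : Equiv.Perm (Fin p),
      monomial (graphExp p n (α ∘ σ)) ((Equiv.Perm.sign σ : ℤ) : ℂ) := by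
  rw [Dmin, Matrix.det_apply, ← Equiv.sum_comp (Equiv.inv (Equiv.Perm (Fin p)))]
  refine Finset.sum_congr rfl fun σ _ => ?_
  have : (monomial (graphExp p n (α ∘ σ)) (1 : ℂ)) = ∏ i, X (i, α (σ i)) := by
    rw [graphExp, monomial_sum_one]; rfl
  rw [← mul_one (((Equiv.Perm.sign σ : ℤ)) : ℂ), ← C_mul_monomial, this]
  rw [← Equiv.prod_comp σ]
  simp [Matrix.of_apply, Units.smul_def, Algebra.smul_def]

theorem IsPBW.rank_lt {p n : ℕ} (hpn : p < n) {α : Fin p → Fin n} (hα : IsPBW p n α)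
    {k l : Fin p} (hkl : k < l) : rankPBW p n (l, α l) < rankPBW p n (l, α k) := by
  obtain ⟨hinj, hdiag, hdec⟩ := hα
  have hne : (α k : ℕ) ≠ α l := fun h => hkl.ne (hinj (Fin.ext h))
  have h1 := hdiag l
  have h2 := hdiag k
  have h3 := hdec l k
  have := l.2
  have := (α k).2
  have := (α l).2
  have hkl' : (k : ℕ) < l := hkl
  have h3' : p ≤ (α k : ℕ) → ¬ ((α k : ℕ) < α l) := fun h h' => absurd (h3 h h') hkl.not_gt
  rw [rankPBW_eq hpn, rankPBW_eq hpn]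
  split_ifs <;> omega

theorem IsPBW.degRevLex_graphExp {p n : ℕ} (hpn : p < n) {α : Fin p → Fin n}
    (hα : IsPBW p n α) {σ : Equiv.Perm (Fin p)} (hσ : σ ≠ 1) :
    degRevLex (rankPBW p n) (graphExp p n (α ∘ σ)) (graphExp p n α) := by
  obtain ⟨l, hl, hmax⟩ : ∃ l, σ l ≠ l ∧ ∀ k, l < k → σ k = k := by
    have hne : (Finset.univ.filter fun l => σ l ≠ l).Nonempty := by
      by_contra h
      refine hσ (Equiv.ext fun l => ?_)
      by_contra hl
      exact h ⟨l, by simpa using hl⟩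
    refine ⟨_, (Finset.mem_filter.1 (Finset.max'_mem _ hne)).2, fun k hk => ?_⟩
    by_contra h
    exact absurd (Finset.le_max' _ k (by simpa using h)) hk.not_ge
  have hlt : σ l < l := by
    refine lt_of_le_of_ne (le_of_not_gt fun h => hl ?_) hl
    exact σ.injective (hmax _ h)
  have hr := hα.rank_lt hpn hlt
  refine Or.inr ⟨by simp only [sum_exponents_graphExp], (l, α (σ l)), ?_, ?_⟩
  · rw [graphExp_apply, graphExp_apply, if_neg fun h => hl (hα.1 h).symm]
    simp
  · rintro ⟨i, c⟩ hic
    rw [graphExp_apply, graphExp_apply]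
    rcases lt_trichotomy i l with h | rfl | h
    · exact absurd hic (rankPBW_lt_of_row_lt _ _ h).not_gt
    · rw [if_neg, if_neg]
      · rintro rfl; omega
      · rintro rfl; simp at hic
    · simp [hmax i h]

theorem IsPBW.initTerm_Dmin {p n : ℕ} (hpn : p < n) {α : Fin p → Fin n} (hα : IsPBW p n α) :
    initTerm (degRevLex (rankPBW p n)) (Dmin p n α) = monomial (graphExp p n α) 1 := by
  have hasymm := degRevLex_asymm (rankPBW_injective hpn)
  have hne : ∀ σ : Equiv.Perm (Fin p), σ ≠ 1 → graphExp p n (α ∘ σ) ≠ graphExp p n α := by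
    intro σ hσ h
    have := hα.degRevLex_graphExp hpn hσ
    rw [h] at this
    exact hasymm _ _ this this
  have hcoeff : coeff (graphExp p n α) (Dmin p n α) = 1 := by
    rw [Dmin_eq_sum, coeff_sum, Finset.sum_eq_single 1]
    · simp
    · intro σ _ hσ
      rw [coeff_monomial, if_neg (hne σ hσ)]
    · simp
  rw [initTerm_eq_monomial hasymm (m := graphExp p n α), hcoeff]
  · rw [mem_support_iff, hcoeff]
    exact one_ne_zero
  · intro m' hm' hne'
    rw [Dmin_eq_sum] at hm'
    obtain ⟨σ, -, hσ⟩ := Finset.mem_biUnion.1 (support_sum hm')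
    have := Finset.mem_singleton.1 (support_monomial_subset hσ)
    subst this
    refine hα.degRevLex_graphExp hpn ?_
    rintro rfl
    exact hne' rfl

/-- The derivation `∑_c z_{j,c} ∂/∂z_{i,c}`, the infinitesimal form of adding a multiple of
row `j` to row `i`. -/
def rowDerivation (p n : ℕ) (i j : Fin p) :
    Derivation ℂ (MvPolynomial (Fin p × Fin n) ℂ) (MvPolynomial (Fin p × Fin n) ℂ) :=
  ∑ c : Fin n, (X (j, c) : MvPolynomial (Fin p × Fin n) ℂ) • pderiv (i, c)

theorem rowDerivation_apply {p n : ℕ} (i j : Fin p) (f : MvPolynomial (Fin p × Fin n) ℂ) :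
    rowDerivation p n i j f = ∑ c, X (j, c) * pderiv (i, c) f := by
  rw [rowDerivation, ← Derivation.coeFnAddMonoidHom_apply, map_sum, Finset.sum_apply]
  rfl

theorem rowDerivation_X {p n : ℕ} (i j l : Fin p) (c : Fin n) :
    rowDerivation p n i j (X (l, c)) = if l = i then X (j, c) else 0 := by
  rw [rowDerivation_apply]
  split_ifs with h
  · subst h
    simp [pderiv_X, Pi.single_apply]
  · exact Finset.sum_eq_zero fun d _ => by rw [pderiv_X_of_ne (by simp [h]), mul_zero]

theorem rowDerivation_prod_X {p n : ℕ} (i j : Fin p) (α : Fin p → Fin n) :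
    rowDerivation p n i j (∏ l, X (l, α l)) = ∏ l, X (if l = i then j else l, α l) := by
  have hconst : ∀ s : Finset (Fin p), i ∉ s →
      rowDerivation p n i j (∏ l ∈ s, X (l, α l)) = 0 := by
    intro s
    induction s using Finset.induction_on with
    | empty => simp
    | insert a s ha ih =>
      intro h
      rw [Finset.mem_insert, not_or] at h
      rw [Finset.prod_insert ha, Derivation.leibniz, ih h.2, rowDerivation_X, if_neg (Ne.symm h.1)]
      simp
  rw [← Finset.mul_prod_erase _ _ (Finset.mem_univ i), Derivation.leibniz,
    hconst _ (Finset.notMem_erase _ _), rowDerivation_X,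
    ← Finset.mul_prod_erase Finset.univ (fun l => X (if l = i then j else l, α l))
      (Finset.mem_univ i)]
  simp only [if_true, smul_eq_mul, mul_zero, zero_add]
  rw [mul_comm]
  congr 1
  exact Finset.prod_congr rfl fun l hl => by rw [if_neg (Finset.ne_of_mem_erase hl)]

theorem rowDerivation_Dmin {p n : ℕ} {i j : Fin p} (hij : i ≠ j) (α : Fin p → Fin n) :
    rowDerivation p n i j (Dmin p n α) = 0 := by
  have hdet : (Matrix.of fun k l : Fin p =>
      (X (if k = i then j else k, α l) : MvPolynomial (Fin p × Fin n) ℂ)).det = 0 :=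
    Matrix.det_zero_of_row_eq hij (by ext l; simp [hij.symm])
  rw [Dmin, Matrix.det_apply, map_sum]
  rw [Matrix.det_apply] at hdet
  rw [← hdet]
  refine Finset.sum_congr rfl fun σ _ => ?_
  simp only [Matrix.of_apply, Units.smul_def, map_zsmul]
  congr 1
  rw [← Equiv.prod_comp σ⁻¹ fun l => (X (σ l, α l) : MvPolynomial (Fin p × Fin n) ℂ),
    ← Equiv.prod_comp σ⁻¹ fun l =>
      (X (if σ l = i then j else σ l, α l) : MvPolynomial (Fin p × Fin n) ℂ)]
  simpa using rowDerivation_prod_X i j (α ∘ ⇑σ⁻¹)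

theorem rowDerivation_eq_zero {p n : ℕ} {i j : Fin p} (hij : i ≠ j)
    {f : MvPolynomial (Fin p × Fin n) ℂ} (hf : f ∈ Pluecker p n) :
    rowDerivation p n i j f = 0 := by
  induction hf using Algebra.adjoin_induction with
  | mem f hf =>
    obtain ⟨α, rfl⟩ := hf
    exact rowDerivation_Dmin hij α
  | algebraMap r => exact Derivation.map_algebraMap _ r
  | add f g _ _ hf hg => rw [map_add, hf, hg, add_zero]
  | mul f g _ _ hf hg => rw [Derivation.leibniz, hf, hg, smul_zero, smul_zero, add_zero]

/-- The substitution `z_{i,c} ↦ z_{i,c} + t v_c`, with `t` the variable `inr none`. -/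
def rankOneShift (p n : ℕ) : MvPolynomial (Fin p × Fin n) ℂ →ₐ[ℂ]
    MvPolynomial ((Fin p × Fin n) ⊕ Option (Fin n)) ℂ :=
  aeval fun x => X (Sum.inl x) + X (Sum.inr none) * X (Sum.inr (some x.2))

theorem degreeOf_rankOneShift_Dmin_le {p n : ℕ} (α : Fin p → Fin n) :
    degreeOf (Sum.inr none) (rankOneShift p n (Dmin p n α)) ≤ 1 := by
  let A : Matrix (Fin p) (Fin p) (MvPolynomial ((Fin p × Fin n) ⊕ Option (Fin n)) ℂ) :=
    Matrix.of fun i j => X (Sum.inl (i, α j))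
  let u : Matrix (Fin p) Unit (MvPolynomial ((Fin p × Fin n) ⊕ Option (Fin n)) ℂ) :=
    Matrix.of fun _ _ => - X (Sum.inr none)
  let v : Matrix Unit (Fin p) (MvPolynomial ((Fin p × Fin n) ⊕ Option (Fin n)) ℂ) :=
    Matrix.of fun _ j => X (Sum.inr (some (α j)))
  have hdet : rankOneShift p n (Dmin p n α) = (Matrix.fromBlocks A u v 1).det := by
    rw [Matrix.det_fromBlocks_one₂₂, Dmin, AlgHom.map_det]
    congr 1
    ext1 i j
    simp [A, u, v, rankOneShift, Matrix.mul_apply]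
  rw [hdet, Matrix.det_apply]
  refine (degreeOf_sum_le _ _ _).trans (Finset.sup_le fun σ _ => ?_)
  have hentry : ∀ a b : Fin p ⊕ Unit, degreeOf (Sum.inr none) (Matrix.fromBlocks A u v 1 a b) ≤
      if b = Sum.inr () then 1 else 0 := by
    rintro (a | a) (b | b)
    · simp [A, degreeOf_X]
    · simp [u]
    · simp [v, degreeOf_X]
    · simp
  have hprod : degreeOf (Sum.inr none) (∏ b, Matrix.fromBlocks A u v 1 (σ b) b) ≤ 1 := by
    refine (degreeOf_prod_le _ _ _).trans ((Finset.sum_le_sum fun b _ => hentry _ b).trans ?_)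
    simp
  rcases Int.units_eq_one_or (Equiv.Perm.sign σ) with h | h <;> simpa [h] using hprod

/-- A submodule containing the degree `k` component of the Plücker algebra: the polynomials that
are homogeneous of degree `k` in every row and whose shift by `t v` has degree at most `k`
in `t`. -/
def rowShiftSubmodule (p n k : ℕ) : Submodule ℂ (MvPolynomial (Fin p × Fin n) ℂ) where
  carrier := {f | (∀ m ∈ f.support, ∀ i, ∑ c, m (i, c) = k) ∧
    degreeOf (Sum.inr none) (rankOneShift p n f) ≤ k}
  zero_mem' := by simp
  add_mem' := by
    rintro f g ⟨hf, hf'⟩ ⟨hg, hg'⟩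
    refine ⟨fun m hm => ?_, ?_⟩
    · rcases Finset.mem_union.1 (support_add hm) with h | h
      · exact hf m h
      · exact hg m h
    · rw [map_add]
      exact (degreeOf_add_le _ _ _).trans (max_le hf' hg')
  smul_mem' := by
    rintro r f ⟨hf, hf'⟩
    refine ⟨fun m hm => hf m (support_smul hm), ?_⟩
    rw [map_smul, smul_eq_C_mul]
    exact (degreeOf_C_mul_le _ _ _).trans hf'

theorem one_mem_rowShiftSubmodule (p n : ℕ) : 1 ∈ rowShiftSubmodule p n 0 := by
  refine ⟨fun m hm i => ?_, by simp⟩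
  have : m = 0 := by simpa [coeff_one, eq_comm] using hm
  simp [this]

theorem mul_mem_rowShiftSubmodule {p n a b : ℕ} {f g : MvPolynomial (Fin p × Fin n) ℂ}
    (hf : f ∈ rowShiftSubmodule p n a) (hg : g ∈ rowShiftSubmodule p n b) :
    f * g ∈ rowShiftSubmodule p n (a + b) := by
  refine ⟨fun m hm i => ?_, ?_⟩
  · obtain ⟨m₁, h₁, m₂, h₂, rfl⟩ := Finset.mem_add.1 (support_mul _ _ hm)
    simp [Finset.sum_add_distrib, hf.1 m₁ h₁ i, hg.1 m₂ h₂ i]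
  · rw [map_mul]
    exact (degreeOf_mul_le _ _ _).trans (add_le_add hf.2 hg.2)

theorem Dmin_mem_rowShiftSubmodule {p n : ℕ} (α : Fin p → Fin n) :
    Dmin p n α ∈ rowShiftSubmodule p n 1 := by
  refine ⟨fun m hm i => ?_, degreeOf_rankOneShift_Dmin_le α⟩
  rw [Dmin_eq_sum] at hm
  obtain ⟨σ, -, hσ⟩ := Finset.mem_biUnion.1 (support_sum hm)
  have := Finset.mem_singleton.1 (support_monomial_subset hσ)
  subst this
  simp [graphExp_apply]

theorem Pluecker_le_iSup_rowShiftSubmodule (p n : ℕ) :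
    Subalgebra.toSubmodule (Pluecker p n) ≤ ⨆ k, rowShiftSubmodule p n k := by
  rw [Pluecker, Algebra.adjoin_eq_span, Submodule.span_le]
  intro f hf
  suffices h : ∃ k, f ∈ rowShiftSubmodule p n k by
    obtain ⟨k, hk⟩ := h
    exact Submodule.mem_iSup_of_mem k hk
  induction hf using Submonoid.closure_induction with
  | mem f hf =>
    obtain ⟨α, rfl⟩ := hf
    exact ⟨1, Dmin_mem_rowShiftSubmodule α⟩
  | one => exact ⟨0, one_mem_rowShiftSubmodule p n⟩
  | mul f g _ _ hf hg =>
    obtain ⟨a, ha⟩ := hf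
    obtain ⟨b, hb⟩ := hg
    exact ⟨a + b, mul_mem_rowShiftSubmodule ha hb⟩

/-- Every monomial of an element `f` of the Plücker algebra occurs in a member of some
`rowShiftSubmodule p n k` whose monomials all occur in `f`. -/
theorem exists_component {p n : ℕ} (hp : 1 ≤ p) {f : MvPolynomial (Fin p × Fin n) ℂ}
    (hf : f ∈ Pluecker p n) {m : Fin p × Fin n →₀ ℕ} (hm : m ∈ f.support) :
    ∃ k, ∃ g ∈ rowShiftSubmodule p n k, m ∈ g.support ∧ g.support ⊆ f.support := by
  have hmem := Pluecker_le_iSup_rowShiftSubmodule p n hf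
  rw [Submodule.mem_iSup_iff_exists_finsupp] at hmem
  obtain ⟨g, hg, rfl⟩ := hmem
  have hcoeff : ∀ k, ∀ m' ∈ (g k).support, coeff m' (g.sum fun _ x => x) = coeff m' (g k) := by
    intro k m' hm'
    rw [Finsupp.sum, coeff_sum, Finset.sum_eq_single k]
    · intro l _ hlk
      by_contra hl
      have h1 := (hg l).1 m' (mem_support_iff.2 hl) ⟨0, hp⟩
      have h2 := (hg k).1 m' hm' ⟨0, hp⟩
      exact hlk (h1.symm.trans h2)
    · intro hk
      rw [Finsupp.notMem_support_iff.1 hk, coeff_zero]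
  obtain ⟨k, -, hk⟩ := Finset.mem_biUnion.1 (support_sum hm)
  exact ⟨k, g k, hg k, hk, fun m' hm' => by
    rw [mem_support_iff, hcoeff k m' hm']
    exact mem_support_iff.1 hm'⟩

theorem exists_exchange_mem_support {p n : ℕ} {f : MvPolynomial (Fin p × Fin n) ℂ}
    (hf : f ∈ Pluecker p n) {i j : Fin p} (hij : i ≠ j) {m : Fin p × Fin n →₀ ℕ}
    (hm : m ∈ f.support) {d : Fin n} (hd : m (i, d) ≠ 0) :
    ∃ c ≠ d, m (j, c) ≠ 0 ∧ ∃ m' ∈ f.support,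
      m' + Finsupp.single (j, c) 1 + Finsupp.single (i, d) 1 =
        m + Finsupp.single (j, d) 1 + Finsupp.single (i, c) 1 := by
  by_contra! hcon
  set w := m - Finsupp.single (i, d) 1 + Finsupp.single (j, d) 1 with hw
  have hle : Finsupp.single (i, d) 1 ≤ m := Finsupp.single_le_iff.2 (Nat.one_le_iff_ne_zero.2 hd)
  have hzero := congrArg (coeff w) (rowDerivation_eq_zero hij hf)
  rw [rowDerivation_apply, coeff_sum, Finset.sum_eq_single d] at hzero
  · rw [coeff_X_mul', if_pos (by simp [hw]), coeff_pderiv, hw, add_tsub_cancel_right,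
      tsub_add_cancel_of_le hle, coeff_zero] at hzero
    rcases mul_eq_zero.1 hzero with h | h
    · exact mem_support_iff.1 hm h
    · exact Nat.cast_add_one_ne_zero _ h
  · intro c _ hc
    rw [coeff_X_mul']
    split_ifs with h
    · have hwc : w (j, c) = m (j, c) := by
        simp [hw, hc.symm, hij]
      have hlew : Finsupp.single (j, c) 1 ≤ w :=
        Finsupp.single_le_iff.2 (Nat.one_le_iff_ne_zero.2 (Finsupp.mem_support_iff.1 h))
      rw [coeff_pderiv]
      suffices hs : coeff (w - Finsupp.single (j, c) 1 + Finsupp.single (i, c) 1) f = 0 by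
        rw [hs, zero_mul]
      by_contra hs
      refine hcon c hc ?_ _ (mem_support_iff.2 hs) ?_
      · rw [← hwc]
        exact Finsupp.mem_support_iff.1 h
      · calc w - Finsupp.single (j, c) 1 + Finsupp.single (i, c) 1 + Finsupp.single (j, c) 1 +
              Finsupp.single (i, d) 1
            = (w - Finsupp.single (j, c) 1 + Finsupp.single (j, c) 1) + Finsupp.single (i, d) 1 +
              Finsupp.single (i, c) 1 := by ac_rfl
          _ = (m - Finsupp.single (i, d) 1 + Finsupp.single (i, d) 1) + Finsupp.single (j, d) 1 +
              Finsupp.single (i, c) 1 := by 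
            rw [tsub_add_cancel_of_le hlew, hw]; ac_rfl
          _ = _ := by rw [tsub_add_cancel_of_le hle]
    · rfl
  · simp

/-- The leading monomial of an element of the Plücker algebra only involves the variables
`z_{i,i}` and `z_{i,c}` with `c > p`. -/
theorem leadingExp_eq_zero {p n : ℕ} (hpn : p < n) {f : MvPolynomial (Fin p × Fin n) ℂ}
    (hf : f ∈ Pluecker p n) {m : Fin p × Fin n →₀ ℕ} (hm : m ∈ f.support)
    (hmax : ∀ m' ∈ f.support, m' ≠ m → degRevLex (rankPBW p n) m' m)
    {i : Fin p} {d : Fin n} (hd : (d : ℕ) < p) (hid : (d : ℕ) ≠ i) : m (i, d) = 0 := by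
  have hasymm := degRevLex_asymm (rankPBW_injective hpn)
  have hmax' : ∀ m' ∈ f.support, ¬ degRevLex (rankPBW p n) m m' := by
    intro m' hm' h
    by_cases hne : m' = m
    · subst hne
      exact hasymm _ _ h h
    · exact hasymm _ _ h (hmax m' hm' hne)
  have upper : ∀ (i : Fin p) (d : Fin n), (d : ℕ) < p → (i : ℕ) < d → m (i, d) = 0 := by
    intro i d hd hid
    by_contra hne
    have hij : i < ⟨d, hd⟩ := hid
    obtain ⟨c, hc, -, m', hm', hexch⟩ := exists_exchange_mem_support hf hij.ne hm hne
    refine hmax' m' hm' (degRevLex_of_exchange hexch (rankPBW_lt_of_row_lt _ _ hij) ?_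
      (rankPBW_lt_of_row_lt _ _ hij))
    have hc' : (c : ℕ) ≠ d := fun h => hc (Fin.ext h)
    rw [rankPBW_eq hpn, rankPBW_eq hpn]
    have := c.2
    simp only
    split_ifs <;> omega
  by_contra hne
  rcases lt_or_gt_of_ne hid with h | h
  · have hij : (⟨d, hd⟩ : Fin p) < i := h
    obtain ⟨c, hc, hjc, m', hm', hexch⟩ := exists_exchange_mem_support hf hij.ne' hm hne
    rw [add_right_comm] at hexch
    refine hmax' m' hm' (degRevLex_of_exchange hexch (rankPBW_lt_of_row_lt _ _ hij)
      (rankPBW_lt_of_row_lt _ _ hij) ?_)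
    have hc' : (c : ℕ) ≠ d := fun h => hc (Fin.ext h)
    have hcd : ¬ ((d : ℕ) < c ∧ (c : ℕ) < i) := fun h =>
      hjc (upper _ c (h.2.trans i.2) h.1)
    rw [rankPBW_eq hpn, rankPBW_eq hpn]
    have := c.2
    have := i.2
    split_ifs <;> omega
  · exact hne (upper i d hd h)

/-- Among exponent vectors with given row and column sums, one supported on a chain of columns
`> p` is the smallest. -/
theorem degRevLex_of_isChain {p n : ℕ} (hpn : p < n) {C : Set (Fin p × Fin n)}
    (hC : IsChain (· ≤ ·) C) (hCp : ∀ x ∈ C, p ≤ (x.2 : ℕ)) {e e' : Fin p × Fin n →₀ ℕ}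
    (he : ∀ x, e x ≠ 0 → x ∈ C) (hrow : ∀ i, ∑ c, e (i, c) = ∑ c, e' (i, c))
    (hcol : ∀ c, ∑ i, e (i, c) = ∑ i, e' (i, c)) (hne : e ≠ e') :
    degRevLex (rankPBW p n) e e' := by
  refine Or.inr ⟨?_, ?_⟩
  · rw [Finsupp.sum_fintype _ _ fun _ => rfl, Finsupp.sum_fintype _ _ fun _ => rfl,
      Fintype.sum_prod_type, Fintype.sum_prod_type]
    exact Finset.sum_congr rfl fun i _ => hrow i
  obtain ⟨⟨i, c⟩, hx, hxmax⟩ := (Finset.univ.filter fun x => e x ≠ e' x).exists_max_image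
    (rankPBW p n) (by
      obtain ⟨x, hx⟩ := DFunLike.ne_iff.1 hne
      exact ⟨x, by simpa using hx⟩)
  simp only [Finset.mem_filter, Finset.mem_univ, true_and] at hx hxmax
  refine ⟨(i, c), ?_, fun y hy => ?_⟩
  · by_contra hlt
    have hlt : e (i, c) < e' (i, c) := by omega
    obtain ⟨j, -, hj⟩ : ∃ j ∈ Finset.univ, e' (j, c) < e (j, c) := by
      by_contra! h
      exact (Finset.sum_lt_sum h ⟨i, Finset.mem_univ i, hlt⟩).ne (hcol c)
    obtain ⟨d, -, hd⟩ : ∃ d ∈ Finset.univ, e' (i, d) < e (i, d) := by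
      by_contra! h
      exact (Finset.sum_lt_sum h ⟨c, Finset.mem_univ c, hlt⟩).ne (hrow i)
    have hjC := he (j, c) (by omega)
    have hdC := he (i, d) (by omega)
    have hji : j < i := by
      rcases lt_trichotomy j i with h | rfl | h
      · exact h
      · omega
      · exact absurd (hxmax (j, c) hj.ne') (rankPBW_lt_of_row_lt _ _ h).not_ge
    have hdc : d < c := by
      have h1 := hxmax (i, d) hd.ne'
      have h2 := hCp _ hjC
      have h3 := hCp _ hdC
      have h4 : (d : ℕ) ≠ c := by
        intro h
        have := Fin.ext h
        subst this
        omega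
      have := i.2
      rw [rankPBW_eq hpn, rankPBW_eq hpn] at h1
      simp only at h2 h3
      rw [Fin.lt_def]
      split_ifs at h1 <;> omega
    rcases hC.total hjC hdC with h | h
    · exact absurd h.2 hdc.not_ge
    · exact absurd h.1 hji.not_ge
  · by_contra h
    exact absurd (hxmax y h) hy.not_ge

/-- The exponent vector obtained from `∏ z_x ^ m x` when `e x` of the factors `z_{i,c}` are
replaced by `t v_c`. -/
def shiftExp (p n : ℕ) (m e : Fin p × Fin n → ℕ) : (Fin p × Fin n) ⊕ Option (Fin n) →₀ ℕ :=
  ∑ x, (Finsupp.single (Sum.inr none) (e x) + Finsupp.single (Sum.inr (some x.2)) (e x) +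
    Finsupp.single (Sum.inl x) (m x - e x))

theorem shiftExp_inl {p n : ℕ} (m e : Fin p × Fin n → ℕ) (x : Fin p × Fin n) :
    shiftExp p n m e (Sum.inl x) = m x - e x := by
  simp only [shiftExp, Finsupp.finsetSum_apply, Finsupp.add_apply, Finsupp.single_apply]
  rw [Finset.sum_eq_single x] <;> simp +contextual

theorem shiftExp_none {p n : ℕ} (m e : Fin p × Fin n → ℕ) :
    shiftExp p n m e (Sum.inr none) = ∑ x, e x := by
  simp [shiftExp, Finsupp.finsetSum_apply]

theorem shiftExp_some {p n : ℕ} (m e : Fin p × Fin n → ℕ) (c : Fin n) :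
    shiftExp p n m e (Sum.inr (some c)) = ∑ i, e (i, c) := by
  simp [shiftExp, Finsupp.finsetSum_apply, Finsupp.single_apply, Fintype.sum_prod_type]

theorem prod_monomial {ι σ R : Type*} [CommSemiring R] (s : Finset ι) (f : ι → σ →₀ ℕ)
    (a : ι → R) : ∏ i ∈ s, monomial (f i) (a i) = monomial (∑ i ∈ s, f i) (∏ i ∈ s, a i) := by
  induction s using Finset.induction_on with
  | empty => simp
  | insert i s hi ih => rw [Finset.prod_insert hi, ih, monomial_mul, Finset.sum_insert hi,
      Finset.prod_insert hi]

theorem rankOneShift_monomial {p n : ℕ} (m : Fin p × Fin n →₀ ℕ) :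
    rankOneShift p n (monomial m 1) =
      ∑ e ∈ Fintype.piFinset fun x => Finset.range (m x + 1),
        monomial (shiftExp p n m e) (∏ x, ((m x).choose (e x) : ℂ)) := by
  rw [rankOneShift, aeval_monomial, map_one, one_mul, Finsupp.prod_fintype _ _ (by simp)]
  simp only [add_comm (X (Sum.inl _)), add_pow]
  rw [Finset.prod_univ_sum]
  refine Finset.sum_congr rfl fun e _ => ?_
  rw [shiftExp, ← prod_monomial]
  refine Finset.prod_congr rfl fun x _ => ?_
  rw [mul_pow, X_pow_eq_monomial, X_pow_eq_monomial, X_pow_eq_monomial, monomial_mul, monomial_mul,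
    ← C_eq_coe_nat, mul_comm, C_mul_monomial]
  simp

/-- The leading monomial of a member of `rowShiftSubmodule p n k` has degree at most `k` along
every chain of columns `> p`. -/
theorem sum_chain_leadingExp_le {p n k : ℕ} (hpn : p < n) {g : MvPolynomial (Fin p × Fin n) ℂ}
    (hg : g ∈ rowShiftSubmodule p n k) {m : Fin p × Fin n →₀ ℕ} (hm : m ∈ g.support)
    (hmax : ∀ m' ∈ g.support, m' ≠ m → degRevLex (rankPBW p n) m' m)
    {C : Finset (Fin p × Fin n)} (hC : IsChain (· ≤ ·) (C : Set (Fin p × Fin n)))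
    (hCp : ∀ x ∈ C, p ≤ (x.2 : ℕ)) : ∑ x ∈ C, m x ≤ k := by
  have hasymm := degRevLex_asymm (rankPBW_injective hpn)
  set e₀ : Fin p × Fin n →₀ ℕ := m.filter (· ∈ C) with he₀
  have he₀_apply : ∀ x, e₀ x = if x ∈ C then m x else 0 := fun x => Finsupp.filter_apply _ _ _
  have he₀_le : ∀ x, e₀ x ≤ m x := fun x => by rw [he₀_apply]; split_ifs <;> omega
  have key : ∀ m' ∈ g.support, ∀ e ∈ Fintype.piFinset fun x => Finset.range (m' x + 1),
      shiftExp p n m' e = shiftExp p n m e₀ → m' = m ∧ e = e₀ := by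
    intro m' hm' e he heq
    have hele : ∀ x, e x ≤ m' x := fun x =>
      Nat.lt_succ_iff.1 (Finset.mem_range.1 (Fintype.mem_piFinset.1 he x))
    set e' : Fin p × Fin n →₀ ℕ := Finsupp.equivFunOnFinite.symm e with he'
    have he'_apply : ∀ x, e' x = e x := fun x => rfl
    have hdiff : ∀ x, m' x - e x = m x - e₀ x := fun x => by
      have := DFunLike.congr_fun heq (Sum.inl x)
      rwa [shiftExp_inl, shiftExp_inl] at this
    have hcol : ∀ c, ∑ i, e₀ (i, c) = ∑ i, e' (i, c) := fun c => by
      have := DFunLike.congr_fun heq (Sum.inr (some c))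
      rw [shiftExp_some, shiftExp_some] at this
      exact this.symm
    have hadd : ∀ x, m' x + e₀ x = m x + e' x := fun x => by
      have h1 := hdiff x
      have h2 := hele x
      have h3 := he₀_le x
      rw [he'_apply]
      omega
    have hrow : ∀ i, ∑ c, e₀ (i, c) = ∑ c, e' (i, c) := fun i => by
      have h : ∑ c, (m' (i, c) + e₀ (i, c)) = ∑ c, (m (i, c) + e' (i, c)) :=
        Finset.sum_congr rfl fun c _ => hadd (i, c)
      rw [Finset.sum_add_distrib, Finset.sum_add_distrib, hg.1 m' hm' i, hg.1 m hm i] at h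
      omega
    by_cases hee : e₀ = e'
    · refine ⟨Finsupp.ext fun x => ?_, ?_⟩
      · have := hadd x
        rw [← hee] at this
        omega
      · rw [hee]
        rfl
    · exfalso
      have h := degRevLex_add_left (m - e₀) (degRevLex_of_isChain hpn hC hCp
        (fun x hx => by
          by_contra hxC
          exact hx ((he₀_apply x).trans (if_neg hxC))) hrow hcol hee)
      have h1 : m - e₀ + e₀ = m := Finsupp.ext fun x => Nat.sub_add_cancel (he₀_le x)
      have h2 : m - e₀ + e' = m' := Finsupp.ext fun x => by
        have := hadd x
        have := he₀_le x
        simp only [Finsupp.add_apply, Finsupp.tsub_apply]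
        omega
      rw [h1, h2] at h
      by_cases hmm : m' = m
      · rw [hmm] at h
        exact hasymm _ _ h h
      · exact hasymm _ _ h (hmax m' hm' hmm)
  have hcoeff : coeff (shiftExp p n m e₀) (rankOneShift p n g) =
      coeff m g * ∏ x, ((m x).choose (e₀ x) : ℂ) := by
    conv_lhs => rw [g.as_sum]
    rw [map_sum, coeff_sum, Finset.sum_eq_single m]
    · rw [← mul_one (coeff m g), ← C_mul_monomial, ← algebraMap_eq, ← Algebra.smul_def, map_smul,
        coeff_smul, rankOneShift_monomial, coeff_sum, Finset.sum_eq_single (e₀ : _ → ℕ)]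
      · simp
      · intro e he hne
        rw [coeff_monomial, if_neg fun h => hne (key m hm e he h).2]
      · intro h
        exact absurd (Fintype.mem_piFinset.2 fun x =>
          Finset.mem_range.2 (Nat.lt_succ_iff.2 (he₀_le x))) h
    · intro m' hm' hne
      rw [← mul_one (coeff m' g), ← C_mul_monomial, ← algebraMap_eq, ← Algebra.smul_def, map_smul,
        coeff_smul, rankOneShift_monomial, coeff_sum, Finset.sum_eq_zero, smul_zero]
      intro e he
      rw [coeff_monomial, if_neg fun h => hne (key m' hm' e he h).1]
    · exact fun h => absurd hm h
  have hmem : shiftExp p n m e₀ ∈ (rankOneShift p n g).support := by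
    rw [mem_support_iff, hcoeff]
    refine mul_ne_zero (mem_support_iff.1 hm) (Finset.prod_ne_zero_iff.2 fun x _ => ?_)
    exact Nat.cast_ne_zero.2 (Nat.choose_pos (he₀_le x)).ne'
  have hle := (monomial_le_degreeOf (Sum.inr none) hmem).trans hg.2
  rw [shiftExp_none] at hle
  simpa [he₀_apply, Finset.sum_ite_mem] using hle

theorem IsPBW.eq_castLE {p n : ℕ} (hpn : p < n) {α : Fin p → Fin n} (hα : IsPBW p n α) {i : Fin p}
    (h : ¬ p ≤ (α i : ℕ)) : α i = Fin.castLE hpn.le i :=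
  Fin.ext (hα.2.1 i (not_le.1 h))

theorem exists_isPBW_of_isAntichain {p n : ℕ} (hpn : p < n) {B : Finset (Fin p × Fin n)}
    (hB : IsAntichain (· ≤ ·) (B : Set (Fin p × Fin n))) (hBp : ∀ x ∈ B, p ≤ (x.2 : ℕ)) :
    ∃ α, IsPBW p n α ∧ ∀ i c, (i, c) ∈ B ↔ p ≤ (c : ℕ) ∧ α i = c := by
  let α : Fin p → Fin n := fun i =>
    if h : ∃ c, (i, c) ∈ B then h.choose else Fin.castLE hpn.le i
  have hmem : ∀ i, p ≤ (α i : ℕ) → (i, α i) ∈ B := by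
    intro i hi
    by_cases h : ∃ c, (i, c) ∈ B
    · simp only [α, dif_pos h]
      exact h.choose_spec
    · simp only [α, dif_neg h, Fin.val_castLE] at hi
      exact absurd i.2 hi.not_gt
  have heq : ∀ i c, (i, c) ∈ B → α i = c := by
    intro i c hc
    have h : ∃ c, (i, c) ∈ B := ⟨c, hc⟩
    simp only [α, dif_pos h]
    rcases le_total h.choose c with hle | hle
    · exact congrArg Prod.snd (hB.eq h.choose_spec hc ⟨le_rfl, hle⟩)
    · exact (congrArg Prod.snd (hB.eq hc h.choose_spec ⟨le_rfl, hle⟩)).symm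
  have hdiag : ∀ i, (α i : ℕ) < p → (α i : ℕ) = i := by
    intro i hi
    by_cases h : ∃ c, (i, c) ∈ B
    · obtain ⟨c, hc⟩ := h
      rw [heq i c hc] at hi
      exact absurd (hBp _ hc) hi.not_ge
    · simp [α, dif_neg h]
  refine ⟨α, ⟨?_, hdiag, ?_⟩, fun i c => ⟨fun h => ⟨hBp _ h, heq i c h⟩, ?_⟩⟩
  · intro i j hij
    by_cases hp : p ≤ (α i : ℕ)
    · have hi := hmem i hp
      have hj := hmem j (hij ▸ hp)
      rw [← hij] at hj
      rcases le_total i j with h | h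
      · exact congrArg Prod.fst (hB.eq hi hj ⟨h, le_rfl⟩)
      · exact (congrArg Prod.fst (hB.eq hj hi ⟨h, le_rfl⟩)).symm
    · have h1 := hdiag i (not_le.1 hp)
      have h2 := hdiag j (hij ▸ not_le.1 hp)
      exact Fin.ext (by rw [← h1, ← h2, hij])
  · intro j k hk hkj
    have hj := hmem j (hk.trans hkj.le)
    by_contra h
    have := congrArg Prod.snd (hB.eq (hmem k hk) hj ⟨not_lt.1 h, hkj.le⟩)
    exact hkj.ne (congrArg Fin.val this)
  · rintro ⟨hc, rfl⟩
    exact hmem i hc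

/-- A dual form of the theorem of Mirsky: an exponent vector of row degree `(k, …, k)` whose degree
along every chain is at most `k` is a sum of `k` exponent vectors of PBW tuples. -/
theorem monomial_mem_adjoin_graphExp {p n : ℕ} (hpn : p < n) (k : ℕ) (m : Fin p × Fin n →₀ ℕ)
    (hrow : ∀ i, ∑ c, m (i, c) = k)
    (hdiag : ∀ (i : Fin p) (c : Fin n), (c : ℕ) < p → (c : ℕ) ≠ i → m (i, c) = 0)
    (hchain : ∀ C : Finset (Fin p × Fin n), IsChain (· ≤ ·) (C : Set (Fin p × Fin n)) →
      (∀ x ∈ C, p ≤ (x.2 : ℕ)) → ∑ x ∈ C, m x ≤ k) :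
    monomial m (1 : ℂ) ∈ Algebra.adjoin ℂ
      ((fun α => monomial (graphExp p n α) (1 : ℂ)) '' {α | IsPBW p n α}) := by
  induction k generalizing m with
  | zero =>
    have : m = 0 := Finsupp.ext fun x => by
      simpa using Finset.sum_eq_zero_iff.1 (hrow x.1) x.2 (Finset.mem_univ _)
    rw [this]
    exact one_mem _
  | succ k ih =>
    set B : Finset (Fin p × Fin n) := Finset.univ.filter fun x =>
      p ≤ (x.2 : ℕ) ∧ m x ≠ 0 ∧ ∀ y : Fin p × Fin n, p ≤ (y.2 : ℕ) → m y ≠ 0 → x ≤ y → y = x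
      with hB
    have hmemB : ∀ x, x ∈ B ↔ p ≤ (x.2 : ℕ) ∧ m x ≠ 0 ∧
        ∀ y : Fin p × Fin n, p ≤ (y.2 : ℕ) → m y ≠ 0 → x ≤ y → y = x := by
      simp [hB]
    have hmeet : ∀ C : Finset (Fin p × Fin n), IsChain (· ≤ ·) (C : Set (Fin p × Fin n)) →
        (∀ x ∈ C, p ≤ (x.2 : ℕ)) → ∑ x ∈ C, m x = k + 1 → ∃ x ∈ C, x ∈ B := by
      intro C hC hCp hsum
      have hsum' : ∑ x ∈ C.filter (m · ≠ 0), m x = k + 1 := by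
        rw [Finset.sum_filter_ne_zero, hsum]
      have hne : (C.filter (m · ≠ 0)).Nonempty := by
        by_contra h
        rw [Finset.not_nonempty_iff_eq_empty.1 h] at hsum'
        simp at hsum'
      have hC' : IsChain (· ≤ ·) (C.filter (m · ≠ 0) : Set (Fin p × Fin n)) :=
        hC.mono fun x hx => (Finset.mem_filter.1 hx).1
      obtain ⟨c, hc⟩ := (C.filter (m · ≠ 0)).exists_maximal hne
      have hmax : ∀ b ∈ C.filter (m · ≠ 0), b ≤ c := fun b hb =>
        (hC'.total hb hc.1).elim id (hc.2 hb)
      obtain ⟨hcC, hmc⟩ := Finset.mem_filter.1 hc.1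
      refine ⟨c, hcC, (hmemB c).2 ⟨hCp c hcC, hmc, fun y hy hmy hcy => ?_⟩⟩
      by_contra hyc
      have hyC : y ∉ C.filter (m · ≠ 0) := fun h => hyc (le_antisymm (hmax y h) hcy)
      have := hchain (insert y (C.filter (m · ≠ 0)))
        (by
          rw [Finset.coe_insert]
          exact hC'.insert fun b hb _ => Or.inr ((hmax b hb).trans hcy))
        (by
          intro x hx
          rcases Finset.mem_insert.1 hx with rfl | hx
          · exact hy
          · exact hCp x (Finset.mem_filter.1 hx).1)
      rw [Finset.sum_insert hyC, hsum'] at this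
      omega
    obtain ⟨α, hα, hαB⟩ := exists_isPBW_of_isAntichain (B := B) hpn
      (fun x hx y hy hne hle => hne
        (((hmemB x).1 hx).2.2 y ((hmemB y).1 hy).1 ((hmemB y).1 hy).2.1 hle).symm)
      (fun x hx => ((hmemB x).1 hx).1)
    have hαle : graphExp p n α ≤ m := by
      rintro ⟨i, c⟩
      rw [graphExp_apply]
      split_ifs with hc
      · subst hc
        rw [Nat.one_le_iff_ne_zero]
        by_cases hp : p ≤ (α i : ℕ)
        · exact ((hmemB _).1 ((hαB i (α i)).2 ⟨hp, rfl⟩)).2.1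
        · intro hzero
          have hsum : ∑ x ∈ (Finset.univ.filter fun c : Fin n => p ≤ (c : ℕ)).image (i, ·), m x =
              k + 1 := by
            rw [Finset.sum_image fun _ _ _ _ h => congrArg Prod.snd h, ← hrow i]
            refine Finset.sum_filter_of_ne fun c _ hc => ?_
            by_contra hcp
            refine hc ?_
            by_cases hci : (c : ℕ) = i
            · rw [← hzero, Fin.ext (hci.trans (hα.2.1 i (not_le.1 hp)).symm)]
            · exact hdiag i c (not_le.1 hcp) hci
          obtain ⟨x, hx, hxB⟩ := hmeet _ (by
            intro x hx y hy _
            obtain ⟨c, -, rfl⟩ := Finset.mem_image.1 hx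
            obtain ⟨d, -, rfl⟩ := Finset.mem_image.1 hy
            exact (le_total c d).imp (fun h => ⟨le_rfl, h⟩) fun h => ⟨le_rfl, h⟩) (by
            intro x hx
            obtain ⟨c, hc, rfl⟩ := Finset.mem_image.1 hx
            exact (Finset.mem_filter.1 hc).2) hsum
          obtain ⟨c, -, rfl⟩ := Finset.mem_image.1 hx
          obtain ⟨h1, h2⟩ := (hαB i c).1 hxB
          exact hp (h2 ▸ h1)
      · exact Nat.zero_le _
    have hm : m - graphExp p n α + graphExp p n α = m := tsub_add_cancel_of_le hαle
    have happly : ∀ x, m x = (m - graphExp p n α) x + graphExp p n α x := fun x => by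
      conv_lhs => rw [← hm]
      rfl
    have hmul : monomial m (1 : ℂ) =
        monomial (m - graphExp p n α) 1 * monomial (graphExp p n α) 1 := by
      rw [monomial_mul, hm, mul_one]
    rw [hmul]
    refine mul_mem (ih _ (fun i => ?_) (fun i c hc hci => ?_) fun C hC hCp => ?_)
      (Algebra.subset_adjoin ⟨α, hα, rfl⟩)
    · have := hrow i
      simp only [happly, Finset.sum_add_distrib] at this
      simpa [graphExp_apply] using this
    · have := hdiag i c hc hci
      rw [happly] at this
      omega
    · have hle := hchain C hC hCp
      have hsum : ∑ x ∈ C, m x =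
          ∑ x ∈ C, (m - graphExp p n α) x + ∑ x ∈ C, graphExp p n α x := by
        rw [← Finset.sum_add_distrib]
        exact Finset.sum_congr rfl fun x _ => happly x
      by_cases hk : ∑ x ∈ C, m x = k + 1
      · obtain ⟨⟨i, c⟩, hx, hxB⟩ := hmeet C hC hCp hk
        have h1 : graphExp p n α (i, c) = 1 := by
          rw [graphExp_apply, if_pos ((hαB i c).1 hxB).2]
        have h2 := Finset.single_le_sum (f := graphExp p n α) (fun _ _ => Nat.zero_le _) hx
        omega
      · omega

/-- The initial algebra of the Plücker algebra is generated by the initial terms of the minors of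
PBW tuples. -/
theorem adjoin_initTerm_Pluecker {p n : ℕ} (hp : 1 ≤ p) (hpn : p < n) :
    Algebra.adjoin ℂ (initTerm (degRevLex (rankPBW p n)) ''
        (Pluecker p n : Set (MvPolynomial (Fin p × Fin n) ℂ))) =
      Algebra.adjoin ℂ ((fun α => monomial (graphExp p n α) (1 : ℂ)) '' {α | IsPBW p n α}) := by
  refine le_antisymm (Algebra.adjoin_le ?_) (Algebra.adjoin_mono ?_)
  · rintro _ ⟨f, hf, rfl⟩
    by_cases h : ∃ m, m ∈ f.support ∧
        ∀ m' ∈ f.support, m' ≠ m → degRevLex (rankPBW p n) m' m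
    · obtain ⟨m, hm, hmax⟩ := h
      rw [initTerm_eq_monomial (degRevLex_asymm (rankPBW_injective hpn)) hm hmax,
        ← mul_one (coeff m f), ← C_mul_monomial, ← algebraMap_eq, ← Algebra.smul_def]
      obtain ⟨k, g, hg, hmg, hgf⟩ := exists_component hp hf hm
      exact Subalgebra.smul_mem _ (monomial_mem_adjoin_graphExp hpn k m (hg.1 m hmg)
        (fun i c hc hci => leadingExp_eq_zero hpn hf hm hmax hc hci) fun C hC hCp =>
        sum_chain_leadingExp_le hpn hg hmg (fun m' hm' => hmax m' (hgf hm')) hC hCp) _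
    · rw [initTerm, dif_neg h]
      exact zero_mem _
  · rintro _ ⟨α, hα, rfl⟩
    exact ⟨Dmin p n α, Algebra.subset_adjoin ⟨α, rfl⟩, hα.initTerm_Dmin hpn⟩

/-- The element `q_{i,c}` of `Q`, with `i` and `c` counted from zero. -/
def qOf {p n : ℕ} (i : Fin p) (c : Fin n) (h : p ≤ (c : ℕ)) : Qfin p n :=
  ⟨(i + 1, c + 1), by have := i.2; have := c.2; simp only; omega⟩

theorem rowOf_qOf {p n : ℕ} (i : Fin p) (c : Fin n) (h : p ≤ (c : ℕ)) :
    rowOf p n (qOf i c h) = i := rfl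

theorem colOf_qOf {p n : ℕ} (i : Fin p) (c : Fin n) (h : p ≤ (c : ℕ)) :
    colOf p n (qOf i c h) = c := rfl

theorem diagColOf_qOf {p n : ℕ} (hpn : p < n) (i : Fin p) (c : Fin n) (h : p ≤ (c : ℕ)) :
    diagColOf p n (qOf i c h) = Fin.castLE hpn.le i := rfl

theorem val_rowOf_add_one {p n : ℕ} (q : Qfin p n) : (rowOf p n q : ℕ) + 1 = q.val.1 := by
  have := q.2
  simp only [rowOf]
  omega

theorem val_colOf_add_one {p n : ℕ} (q : Qfin p n) : (colOf p n q : ℕ) + 1 = q.val.2 := by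
  have := q.2
  simp only [colOf]
  omega

theorem le_colOf {p n : ℕ} (q : Qfin p n) : p ≤ (colOf p n q : ℕ) := by
  have := q.2
  have := val_colOf_add_one q
  omega

theorem Qfin_ext {p n : ℕ} {q q' : Qfin p n} (hrow : rowOf p n q = rowOf p n q')
    (hcol : colOf p n q = colOf p n q') : q = q' := by
  refine Subtype.ext (Prod.ext ?_ ?_)
  · rw [← val_rowOf_add_one, ← val_rowOf_add_one, hrow]
  · rw [← val_colOf_add_one, ← val_colOf_add_one, hcol]

theorem qOf_eq_iff {p n : ℕ} (i : Fin p) (c : Fin n) (h : p ≤ (c : ℕ)) (q : Qfin p n) :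
    qOf i c h = q ↔ (i, c) = (rowOf p n q, colOf p n q) := by
  rw [Prod.mk.injEq]
  refine ⟨?_, fun hq => Qfin_ext hq.1 hq.2⟩
  rintro rfl
  exact ⟨rfl, rfl⟩

theorem qleF_iff {p n : ℕ} (q q' : Qfin p n) :
    qleF p n q q' ↔ rowOf p n q ≤ rowOf p n q' ∧ colOf p n q ≤ colOf p n q' := by
  rw [qleF, ← val_rowOf_add_one, ← val_rowOf_add_one, ← val_colOf_add_one, ← val_colOf_add_one,
    Fin.le_def, Fin.le_def]
  omega

instance finite_Qfin (p n : ℕ) : Finite (Qfin p n) :=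
  Finite.of_injective (fun q => (rowOf p n q, colOf p n q)) fun _ _ h =>
    Qfin_ext (congrArg Prod.fst h) (congrArg Prod.snd h)

/-- The maximal elements of `J`. -/
abbrev maxElems {p n : ℕ} (J : Finset (Qfin p n)) : Finset (Qfin p n) :=
  J.filter fun q => ∀ q' ∈ J, ¬ (qleF p n q q' ∧ q ≠ q')

theorem genQ_eq {p n : ℕ} (J : Finset (Qfin p n)) :
    genQ p n J = X none * ∏ q ∈ maxElems J, X (some q) := by
  rw [genQ, ← Finset.sum_filter, ← mul_one (1 : ℂ), ← monomial_mul, monomial_sum_one]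
  rfl

theorem prod_eq_prod_rows {p n : ℕ} {M : Type*} [CommMonoid M] {α : Fin p → Fin n}
    {S : Finset (Qfin p n)} (hS : ∀ q, q ∈ S ↔ α (rowOf p n q) = colOf p n q) (g : Qfin p n → M) :
    ∏ q ∈ S, g q = ∏ i, if h : p ≤ (α i : ℕ) then g (qOf i (α i) h) else 1 := by
  rw [← Finset.prod_fiberwise S (rowOf p n) g]
  refine Finset.prod_congr rfl fun i _ => ?_
  split_ifs with h
  · have : S.filter (rowOf p n · = i) = {qOf i (α i) h} := by
      ext q
      rw [Finset.mem_filter, Finset.mem_singleton, hS, eq_comm (a := q), qOf_eq_iff, Prod.mk.injEq]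
      constructor
      · rintro ⟨h1, rfl⟩
        exact ⟨rfl, h1⟩
      · rintro ⟨rfl, h2⟩
        exact ⟨h2, rfl⟩
    rw [this, Finset.prod_singleton]
  · refine Finset.prod_eq_one fun q hq => ?_
    rw [Finset.mem_filter, hS] at hq
    obtain ⟨h1, rfl⟩ := hq
    exact absurd (h1 ▸ le_colOf q) h

theorem IsPBW.mem_maxElems_iff {p n : ℕ} {α : Fin p → Fin n} (hα : IsPBW p n α)
    {J : Finset (Qfin p n)} (hJ : (J : Set (Qfin p n)) = phiPBWset p n α) (q : Qfin p n) :
    q ∈ maxElems J ↔ α (rowOf p n q) = colOf p n q := by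
  have hmem : ∀ q, q ∈ J ↔ ∃ j : Fin p, p ≤ (α j : ℕ) ∧ rowOf p n q ≤ j ∧ colOf p n q ≤ α j := by
    intro q
    rw [← Finset.mem_coe, hJ]
    simp only [phiPBWset, Set.mem_ofPred_eq, Fin.le_def, ← val_rowOf_add_one, ← val_colOf_add_one,
      add_le_add_iff_right]
  rw [Finset.mem_filter, hmem]
  constructor
  · rintro ⟨⟨j, hp, hr, hc⟩, hmax⟩
    have hq : qOf j (α j) hp = q := by
      by_contra hne
      exact hmax _ ((hmem _).2 ⟨j, hp, le_rfl, le_rfl⟩)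
        ⟨(qleF_iff q (qOf j (α j) hp)).2 ⟨hr, hc⟩, Ne.symm hne⟩
    rw [← hq, rowOf_qOf, colOf_qOf]
  · intro h
    refine ⟨⟨rowOf p n q, h ▸ le_colOf q, le_rfl, h.ge⟩, ?_⟩
    rintro q' hq' ⟨hle, hne⟩
    obtain ⟨j, hp, hr, hc⟩ := (hmem q').1 hq'
    obtain ⟨hr', hc'⟩ := (qleF_iff _ _).1 hle
    have hq : p ≤ (α (rowOf p n q) : ℕ) := h ▸ le_colOf q
    rcases (hr'.trans hr).lt_or_eq with hlt | rfl
    · have hdec : ¬ (α (rowOf p n q) : ℕ) < α j := fun h' => (hα.2.2 _ _ hq h').not_gt hlt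
      refine hlt.ne (hα.1 (Fin.ext (le_antisymm ?_ (not_lt.1 hdec))))
      rw [h]
      exact hc'.trans hc
    · exact hne (Qfin_ext (le_antisymm hr' hr) (le_antisymm hc' (h ▸ hc)))

theorem IsPBW.exists_orderIdeal {p n : ℕ} {α : Fin p → Fin n} (hα : IsPBW p n α) :
    ∃ J : Finset (Qfin p n), (∀ a ∈ J, ∀ b, qleF p n b a → b ∈ J) ∧
      ∀ q, q ∈ maxElems J ↔ α (rowOf p n q) = colOf p n q := by
  have hfin := Set.toFinite (phiPBWset p n α)
  refine ⟨hfin.toFinset, ?_, hα.mem_maxElems_iff hfin.coe_toFinset⟩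
  intro a ha b hba
  rw [Set.Finite.mem_toFinset] at ha ⊢
  obtain ⟨j, hp, hr, hc⟩ := ha
  exact ⟨j, hp, hba.1.trans hr, hba.2.trans hc⟩

theorem exists_isPBW_maxElems {p n : ℕ} (hpn : p < n) (J : Finset (Qfin p n)) :
    ∃ α, IsPBW p n α ∧ ∀ q, q ∈ maxElems J ↔ α (rowOf p n q) = colOf p n q := by
  have hmem : ∀ q, (rowOf p n q, colOf p n q) ∈
      (maxElems J).image (fun q => (rowOf p n q, colOf p n q)) ↔ q ∈ maxElems J := by
    intro q
    rw [Finset.mem_image]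
    refine ⟨?_, fun h => ⟨q, h, rfl⟩⟩
    rintro ⟨q', hq', h⟩
    rwa [← Qfin_ext (congrArg Prod.fst h) (congrArg Prod.snd h)]
  obtain ⟨α, hα, hαB⟩ := exists_isPBW_of_isAntichain hpn
    (B := (maxElems J).image fun q => (rowOf p n q, colOf p n q)) (by
      intro x hx y hy hne hle
      obtain ⟨q, hq, rfl⟩ := Finset.mem_image.1 hx
      obtain ⟨q', hq', rfl⟩ := Finset.mem_image.1 hy
      exact (Finset.mem_filter.1 hq).2 q' (Finset.mem_filter.1 hq').1
        ⟨(qleF_iff _ _).2 hle, fun h => hne (by rw [h])⟩) (by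
      intro x hx
      obtain ⟨q, -, rfl⟩ := Finset.mem_image.1 hx
      exact le_colOf q)
  refine ⟨α, hα, fun q => ?_⟩
  rw [← hmem, hαB]
  exact and_iff_right (le_colOf q)

/-- The exponent vector to which the substitution into the Hibi ring sends the variable `x`. -/
def hibiVarExp (p n : ℕ) (x : Fin p × Fin n) : Option (Qfin p n) →₀ ℕ :=
  (if (x.1 : ℕ) = 0 then Finsupp.single none 1 else 0) +
    if h : p ≤ (x.2 : ℕ) then Finsupp.single (some (qOf x.1 x.2 h)) 1 else 0

/-- The substitution `z_{i,c} ↦ s^[i = 1] y_{q_{i,c}}` (where `y_{q_{i,c}}` is read as `1` if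
`c ≤ p`), which on balanced monomials inverts `y_{q_{i,c}} ↦ z_{i,c} z_{i,i}⁻¹`,
`s ↦ ∏ z_{i,i}`. -/
def toHibi (p n : ℕ) : MvPolynomial (Fin p × Fin n) ℂ →ₐ[ℂ] MvPolynomial (Option (Qfin p n)) ℂ :=
  aeval fun x => monomial (hibiVarExp p n x) 1

/-- The exponent vector of the image under `toHibi` of the monomial with exponent `m`. -/
def hibiExp (p n : ℕ) (m : Fin p × Fin n →₀ ℕ) : Option (Qfin p n) →₀ ℕ :=
  ∑ x, m x • hibiVarExp p n x

theorem toHibi_monomial {p n : ℕ} (m : Fin p × Fin n →₀ ℕ) (a : ℂ) :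
    toHibi p n (monomial m a) = monomial (hibiExp p n m) a := by
  rw [toHibi, aeval_monomial, Finsupp.prod_fintype _ _ (by simp)]
  simp only [monomial_pow, one_pow]
  rw [prod_monomial, Finset.prod_const_one, algebraMap_eq, C_mul_monomial, mul_one, hibiExp]

theorem hibiExp_none {p n : ℕ} (hp : 1 ≤ p) (m : Fin p × Fin n →₀ ℕ) :
    hibiExp p n m none = ∑ c, m (⟨0, hp⟩, c) := by
  have hx : ∀ x, hibiVarExp p n x none = if x.1 = ⟨0, hp⟩ then 1 else 0 := by
    intro x
    simp only [hibiVarExp, Finsupp.add_apply, Fin.ext_iff]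
    split_ifs <;> simp
  rw [hibiExp, Finsupp.finsetSum_apply, Fintype.sum_prod_type,
    Finset.sum_eq_single (⟨0, hp⟩ : Fin p)]
  · simp [hx]
  · intro i _ hi
    simp [hx, hi]
  · simp

theorem hibiExp_some {p n : ℕ} (m : Fin p × Fin n →₀ ℕ) (q : Qfin p n) :
    hibiExp p n m (some q) = m (rowOf p n q, colOf p n q) := by
  have hx : ∀ x, hibiVarExp p n x (some q) = if x = (rowOf p n q, colOf p n q) then 1 else 0 := by
    rintro ⟨i, c⟩
    have h1 : (if (i : ℕ) = 0 then Finsupp.single (none : Option (Qfin p n)) 1 else 0) (some q) =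
        0 := by split_ifs <;> simp
    rw [hibiVarExp, Finsupp.add_apply, h1, zero_add]
    by_cases h : p ≤ (c : ℕ)
    · rw [dif_pos h, Finsupp.single_apply]
      simp only [Option.some.injEq, qOf_eq_iff]
    · rw [dif_neg h, if_neg]
      · rfl
      · rintro heq
        obtain ⟨rfl, rfl⟩ := Prod.mk.inj heq
        exact h (le_colOf q)
  simp [hibiExp, Finsupp.finsetSum_apply, hx]

/-- Exponent vectors of constant row degree that only involve the variables `z_{i,i}` and
`z_{i,c}` with `c > p`. -/
def IsBalanced (p n : ℕ) (m : Fin p × Fin n →₀ ℕ) : Prop :=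
  (∃ k, ∀ i, ∑ c, m (i, c) = k) ∧
    ∀ (i : Fin p) (c : Fin n), (c : ℕ) < p → (c : ℕ) ≠ i → m (i, c) = 0

theorem IsBalanced.eq_of_hibiExp_eq {p n : ℕ} (hp : 1 ≤ p) (hpn : p < n)
    {m m' : Fin p × Fin n →₀ ℕ} (hm : IsBalanced p n m) (hm' : IsBalanced p n m')
    (h : hibiExp p n m = hibiExp p n m') : m = m' := by
  obtain ⟨⟨k, hk⟩, hd⟩ := hm
  obtain ⟨⟨k', hk'⟩, hd'⟩ := hm'
  have hkk : k = k' := by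
    have := DFunLike.congr_fun h none
    rwa [hibiExp_none hp, hibiExp_none hp, hk, hk'] at this
  have hoff : ∀ i c, c ≠ Fin.castLE hpn.le i → m (i, c) = m' (i, c) := by
    intro i c hc
    by_cases hcp : p ≤ (c : ℕ)
    · have := DFunLike.congr_fun h (some (qOf i c hcp))
      rwa [hibiExp_some, hibiExp_some, rowOf_qOf, colOf_qOf] at this
    · have hci : (c : ℕ) ≠ i := fun h => hc (Fin.ext h)
      rw [hd i c (not_le.1 hcp) hci, hd' i c (not_le.1 hcp) hci]
  refine Finsupp.ext fun ⟨i, c⟩ => ?_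
  by_cases hc : c = Fin.castLE hpn.le i
  · subst hc
    have h1 := (hk i).trans (hkk.trans (hk' i).symm)
    rw [← Finset.add_sum_erase _ _ (Finset.mem_univ (Fin.castLE hpn.le i)),
      ← Finset.add_sum_erase _ (fun c => m' (i, c)) (Finset.mem_univ (Fin.castLE hpn.le i)),
      Finset.sum_congr rfl fun c hc => hoff i c (Finset.ne_of_mem_erase hc)] at h1
    exact Nat.add_right_cancel h1
  · exact hoff i c hc

theorem isBalanced_of_mem_adjoin {p n : ℕ} {f : MvPolynomial (Fin p × Fin n) ℂ}
    (hf : f ∈ Algebra.adjoin ℂ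
      ((fun α => monomial (graphExp p n α) (1 : ℂ)) '' {α | IsPBW p n α})) :
    ∀ m ∈ f.support, IsBalanced p n m := by
  induction hf using Algebra.adjoin_induction with
  | mem f hf =>
    obtain ⟨α, hα, rfl⟩ := hf
    intro m hm
    have := Finset.mem_singleton.1 (support_monomial_subset hm)
    subst this
    refine ⟨⟨1, fun i => by simp [graphExp_apply]⟩, fun i c hc hci => ?_⟩
    rw [graphExp_apply, if_neg]
    rintro rfl
    exact hci (hα.2.1 i hc)
  | algebraMap r =>
    intro m hm
    have := Finset.mem_singleton.1 (support_monomial_subset hm)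
    subst this
    exact ⟨⟨0, by simp⟩, by simp⟩
  | add f g _ _ hf hg =>
    intro m hm
    rcases Finset.mem_union.1 (support_add hm) with h | h
    · exact hf m h
    · exact hg m h
  | mul f g _ _ hf hg =>
    intro m hm
    obtain ⟨a, ha, b, hb, rfl⟩ := Finset.mem_add.1 (support_mul _ _ hm)
    obtain ⟨⟨k, hk⟩, hd⟩ := hf a ha
    obtain ⟨⟨l, hl⟩, hd'⟩ := hg b hb
    refine ⟨⟨k + l, fun i => ?_⟩, fun i c hc hci => ?_⟩
    · simp [Finset.sum_add_distrib, hk, hl]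
    · simp [hd i c hc hci, hd' i c hc hci]

theorem eq_zero_of_toHibi_eq_zero {p n : ℕ} (hp : 1 ≤ p) (hpn : p < n)
    {f : MvPolynomial (Fin p × Fin n) ℂ} (hf : ∀ m ∈ f.support, IsBalanced p n m)
    (h : toHibi p n f = 0) : f = 0 := by
  by_contra hne
  obtain ⟨m, hm⟩ := Finset.nonempty_iff_ne_empty.2 (mt support_eq_empty.1 hne)
  have hcoeff := congrArg (coeff (hibiExp p n m)) h
  rw [f.as_sum, map_sum, coeff_sum, Finset.sum_eq_single m] at hcoeff
  · rw [toHibi_monomial, coeff_monomial, if_pos rfl, coeff_zero] at hcoeff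
    exact mem_support_iff.1 hm hcoeff
  · intro m' hm' hne
    rw [toHibi_monomial, coeff_monomial, if_neg fun h =>
      hne ((hf m' hm').eq_of_hibiExp_eq hp hpn (hf m hm) h)]
  · exact fun h => absurd hm h

theorem monomial_graphExp {p n : ℕ} (α : Fin p → Fin n) :
    monomial (graphExp p n α) (1 : ℂ) = ∏ i, X (i, α i) := by
  rw [graphExp, monomial_sum_one]
  rfl

theorem toHibi_graphExp {p n : ℕ} (hp : 1 ≤ p) {α : Fin p → Fin n} {J : Finset (Qfin p n)}
    (hJ : ∀ q, q ∈ maxElems J ↔ α (rowOf p n q) = colOf p n q) :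
    toHibi p n (monomial (graphExp p n α) 1) = genQ p n J := by
  have hX : ∀ x : Fin p × Fin n, toHibi p n (X x) = (if x.1 = ⟨0, hp⟩ then X none else 1) *
      if h : p ≤ (x.2 : ℕ) then X (some (qOf x.1 x.2 h)) else 1 := by
    intro x
    rw [toHibi, aeval_X, hibiVarExp, ← mul_one (1 : ℂ), ← monomial_mul]
    simp only [Fin.ext_iff]
    congr 1 <;> split_ifs <;> rfl
  rw [genQ_eq, prod_eq_prod_rows hJ, monomial_graphExp, map_prod]
  simp only [hX, Finset.prod_mul_distrib]
  rw [Finset.prod_ite_eq' Finset.univ, if_pos (Finset.mem_univ _)]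

theorem map_toHibi_adjoin {p n : ℕ} (hp : 1 ≤ p) (hpn : p < n) :
    (Algebra.adjoin ℂ ((fun α => monomial (graphExp p n α) (1 : ℂ)) '' {α | IsPBW p n α})).map
      (toHibi p n) = hibiQ p n := by
  rw [AlgHom.map_adjoin, hibiQ]
  congr 1
  ext f
  constructor
  · rintro ⟨_, ⟨α, hα, rfl⟩, rfl⟩
    obtain ⟨J, hJ, hmax⟩ := IsPBW.exists_orderIdeal hα
    exact ⟨J, hJ, toHibi_graphExp hp hmax⟩
  · rintro ⟨J, -, rfl⟩
    obtain ⟨α, hα, hmax⟩ := exists_isPBW_maxElems hpn J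
    exact ⟨_, ⟨α, hα, rfl⟩, toHibi_graphExp hp hmax⟩

theorem graphExp_mul_prod_diag {p n : ℕ} (hpn : p < n) {α : Fin p → Fin n} (hα : IsPBW p n α)
    {S : Finset (Qfin p n)} (hS : ∀ q, q ∈ S ↔ α (rowOf p n q) = colOf p n q) :
    monomial (graphExp p n α) (1 : ℂ) * ∏ q ∈ S, X (rowOf p n q, diagColOf p n q) =
      (∏ i : Fin p, X (i, Fin.castLE hpn.le i)) * ∏ q ∈ S, X (rowOf p n q, colOf p n q) := by
  rw [monomial_graphExp, prod_eq_prod_rows hS, prod_eq_prod_rows hS, ← Finset.prod_mul_distrib,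
    ← Finset.prod_mul_distrib]
  refine Finset.prod_congr rfl fun i _ => ?_
  split_ifs with h
  · rw [rowOf_qOf, colOf_qOf, diagColOf_qOf hpn, mul_comm]
  · rw [hα.eq_castLE hpn h]

/-- The initial subalgebra `in_{<_pbw}(𝒫)` is isomorphic, as an
ℕ₀-graded algebra, to the generalized Hibi ring `A_{∅,Q}(Q,≺)`, via
`in_{<_pbw}(D_I) ↦ s·y^{v_{∅,Q}(φ_pbw(I))}`; the inverse is induced by
`y_{q_{i,j}} ↦ z_{i,j}·z_{i,i}⁻¹`, `s ↦ z_{1,1}⋯z_{p,p}` (stated below in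
denominator-free form). -/
theorem statement6 (p n : ℕ) (hp : 1 ≤ p) (hpn : p < n) :
    ∃ e : ↥(Algebra.adjoin ℂ (initTerm (degRevLex (rankPBW p n)) ''
          ((Pluecker p n : Set (MvPolynomial (Fin p × Fin n) ℂ))))) ≃ₐ[ℂ]
        ↥(hibiQ p n),
      (∀ (α : Fin p → Fin n), IsPBW p n α →
        ∀ J : Finset (Qfin p n), (↑J : Set (Qfin p n)) = phiPBWset p n α →
          ∀ (h1 : initTerm (degRevLex (rankPBW p n)) (Dmin p n α) ∈
              Algebra.adjoin ℂ (initTerm (degRevLex (rankPBW p n)) ''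
                ((Pluecker p n : Set (MvPolynomial (Fin p × Fin n) ℂ)))))
            (h2 : genQ p n J ∈ hibiQ p n),
            e ⟨initTerm (degRevLex (rankPBW p n)) (Dmin p n α), h1⟩ =
              ⟨genQ p n J, h2⟩) ∧
      (∀ J : Finset (Qfin p n), (∀ a ∈ J, ∀ b, qleF p n b a → b ∈ J) →
        ∀ h2 : genQ p n J ∈ hibiQ p n,
          ((e.symm ⟨genQ p n J, h2⟩ : _) : MvPolynomial (Fin p × Fin n) ℂ) *
              ∏ q ∈ J.filter (fun q => ∀ q' ∈ J, ¬ (qleF p n q q' ∧ q ≠ q')),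
                X (rowOf p n q, diagColOf p n q) =
            (∏ i : Fin p, X (i, Fin.castLE hpn.le i)) *
              ∏ q ∈ J.filter (fun q => ∀ q' ∈ J, ¬ (qleF p n q q' ∧ q ≠ q')),
                X (rowOf p n q, colOf p n q)) := by
  have hA := adjoin_initTerm_Pluecker hp hpn
  set A := Algebra.adjoin ℂ (initTerm (degRevLex (rankPBW p n)) ''
    (Pluecker p n : Set (MvPolynomial (Fin p × Fin n) ℂ)))
  have hmap : A.map (toHibi p n) = hibiQ p n := by rw [hA, map_toHibi_adjoin hp hpn]
  let φ : A →ₐ[ℂ] hibiQ p n := ((toHibi p n).comp A.val).codRestrict (hibiQ p n) fun f => by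
    rw [← hmap]
    exact ⟨f, f.2, rfl⟩
  have hφ : Function.Bijective φ := by
    refine ⟨(injective_iff_map_eq_zero φ).2 fun f hf => ?_, fun g => ?_⟩
    · exact Subtype.ext (eq_zero_of_toHibi_eq_zero hp hpn
        (isBalanced_of_mem_adjoin (hA ▸ f.2)) (congrArg Subtype.val hf))
    · obtain ⟨f, hf, hfg⟩ := hmap.ge g.2
      exact ⟨⟨f, hf⟩, Subtype.ext hfg⟩
  refine ⟨AlgEquiv.ofBijective φ hφ, fun α hα J hJ h1 h2 => Subtype.ext ?_, fun J hJ h2 => ?_⟩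
  · change toHibi p n (initTerm (degRevLex (rankPBW p n)) (Dmin p n α)) = genQ p n J
    rw [hα.initTerm_Dmin hpn, toHibi_graphExp hp (hα.mem_maxElems_iff hJ)]
  · obtain ⟨α, hα, hmax⟩ := exists_isPBW_maxElems hpn J
    have hmem : monomial (graphExp p n α) (1 : ℂ) ∈ A := by
      rw [hA]
      exact Algebra.subset_adjoin ⟨α, hα, rfl⟩
    have hsymm : (AlgEquiv.ofBijective φ hφ).symm ⟨genQ p n J, h2⟩ =
        ⟨monomial (graphExp p n α) 1, hmem⟩ := by
      rw [AlgEquiv.symm_apply_eq]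
      exact Subtype.ext (toHibi_graphExp hp hmax).symm
    rw [hsymm]
    exact graphExp_mul_prod_diag hpn hα hmax
end
end

section
/- Fix integers 1 ≤ p < n. The set of products D_{I₁}⋯D_{I_k} such that the rectangular Young tableau of height p with columns I₁,…,I_k is PBW-semistandard (i.e. every I_j is a PBW tuple and I₁ ⪯_pbw … ⪯_pbw I_k) is a ℂ-vector-space basis of the Plücker algebra 𝒫. -/
open scoped Classical

noncomputable section

open MvPolynomial

/-- The order `⪯_pbw` on PBW tuples: `I ⪯_pbw I'` iff for every `k` there is `l ≥ k`
with `α'_l ≥ α_k`. -/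
def pbwLeFin (p n : ℕ) (α α' : Fin p → Fin n) : Prop :=
  ∀ a : Fin p, ∃ b : Fin p, a ≤ b ∧ (α a : ℕ) ≤ (α' b : ℕ)

/-- The set of products `D_{I₁}⋯D_{I_k}` over PBW-semistandard Young tableaux, i.e.
over tuples of PBW columns with `I₁ ⪯_pbw … ⪯_pbw I_k`. -/
def pbwProducts (p n : ℕ) : Set (MvPolynomial (Fin p × Fin n) ℂ) :=
  {f | ∃ (k : ℕ) (I : Fin k → (Fin p → Fin n)),
    (∀ i, IsPBW p n (I i)) ∧
    (∀ i j : Fin k, i ≤ j → pbwLeFin p n (I i) (I j)) ∧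
    f = ∏ i : Fin k, Dmin p n (I i)}

theorem dite_update_eq_update_dite {ι M : Type*} [DecidableEq ι] {s : Set ι} [DecidableEq s]
    (c : ι → M) (w : s → M) (x : s) (t : M) :
    (fun i => if h : i ∈ s then Function.update w x t ⟨i, h⟩ else c i) =
      Function.update (fun i => if h : i ∈ s then w ⟨i, h⟩ else c i) x t := by
  ext i
  by_cases hi : i = x
  · subst hi; simp
  · by_cases h : i ∈ s
    · have : (⟨i, h⟩ : s) ≠ x := fun e => hi (by rw [← e])
      simp [h, hi, this]
    · simp [h, hi]

/-- Restriction of an alternating map to the arguments indexed by `s`, the other arguments being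
fixed to the values of `c`. -/
def AlternatingMap.fixOutside {R M N ι : Type*} [CommRing R] [AddCommGroup M] [Module R M]
    [AddCommGroup N] [Module R N] (f : M [⋀^ι]→ₗ[R] N) (s : Set ι) (c : ι → M) :
    M [⋀^s]→ₗ[R] N where
  toFun w := f fun i => if h : i ∈ s then w ⟨i, h⟩ else c i
  map_update_add' := by
    intro _ w x y z
    simp only [dite_update_eq_update_dite, f.map_update_add]
  map_update_smul' := by
    intro _ w x r y
    simp only [dite_update_eq_update_dite, f.map_update_smul]
  map_eq_zero_of_eq' := by
    intro w x y hxy hne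
    refine f.map_eq_zero_of_eq _ (i := x) (j := y) ?_ (fun e => hne (Subtype.ext e))
    simpa using hxy

theorem Dmin_eq_detRowAlternating {p n : ℕ} (α : Fin p → Fin n) :
    Dmin p n α = Matrix.detRowAlternating
      (fun j i : Fin p => (X (i, α j) : MvPolynomial (Fin p × Fin n) ℂ)) := by
  rw [Dmin, ← Matrix.det_transpose]
  rfl

/-- Replacing small values by large ones increases the sum. -/
theorem sum_inr_lt_of_perm {A B : Type*} [Fintype A] [Fintype B] (u : A ⊕ B → ℕ)
    (hu : ∀ x y, u (Sum.inl x) < u (Sum.inr y)) (σ : Equiv.Perm (A ⊕ B))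
    {x₀ : A} {y₀ : B} (hσ : σ (Sum.inl x₀) = Sum.inr y₀) :
    ∑ y, u (σ (Sum.inr y)) < ∑ y, u (Sum.inr y) := by
  obtain ⟨c, hc₁, hc₂⟩ : ∃ c : ℕ, (∀ x, u (Sum.inl x) < c) ∧ ∀ y, c ≤ u (Sum.inr y) := by
    obtain ⟨y, -, hy⟩ := Finset.exists_min_image Finset.univ (fun y => u (Sum.inr y))
      ⟨y₀, Finset.mem_univ _⟩
    exact ⟨u (Sum.inr y), fun x => hu x y, fun z => hy z (Finset.mem_univ _)⟩
  let S : Finset (A ⊕ B) := Finset.univ.map ⟨Sum.inr, Sum.inr_injective⟩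
  let T : Finset (A ⊕ B) := S.map σ.toEmbedding
  have hS : ∑ y, u (Sum.inr y) = ∑ z ∈ S, u z := by simp [S]
  have hT : ∑ y, u (σ (Sum.inr y)) = ∑ z ∈ T, u z := by simp [T, S]
  have hcard : (T \ S).card = (S \ T).card :=
    Finset.card_sdiff_comm (by simp [T])
  have hne : (S \ T).Nonempty := by
    refine ⟨Sum.inr y₀, ?_⟩
    simp only [Finset.mem_sdiff, S, T, Finset.mem_map, Finset.mem_univ, true_and]
    refine ⟨⟨y₀, rfl⟩, ?_⟩
    rintro ⟨z, ⟨y, rfl⟩, hz⟩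
    have := σ.injective (hz.trans hσ.symm)
    simp at this
  have hne' : (T \ S).Nonempty := by
    rw [← Finset.card_pos, hcard, Finset.card_pos]; exact hne
  rw [hS, hT, ← Finset.sum_inter_add_sum_sdiff T S, ← Finset.sum_inter_add_sum_sdiff S T,
    Finset.inter_comm]
  have h₁ : ∑ z ∈ T \ S, u z < (T \ S).card • c := by
    refine (Finset.sum_lt_sum_of_nonempty hne' (g := fun _ => c) ?_).trans_eq (by simp)
    intro z hz
    rcases z with x | y
    · exact hc₁ x
    · simp [S] at hz
  have h₂ : (S \ T).card • c ≤ ∑ z ∈ S \ T, u z := by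
    refine Finset.card_nsmul_le_sum _ _ _ ?_
    intro z hz
    rcases z with x | y
    · simp [S] at hz
    · exact hc₂ y
  rw [hcard] at h₁
  omega

theorem Dmin_mul_mem_span_exchange {p n : ℕ} (I J : Fin p → Fin n) (a : Fin p)
    (h : ∀ x ≤ a, ∀ y ≥ a, J x < I y) :
    Dmin p n I * Dmin p n J ∈ Submodule.span ℂ
      {f | ∃ I' J' : Fin p → Fin n, f = Dmin p n I' * Dmin p n J' ∧
        ∑ x, (I' x : ℕ) + ∑ x, (J' x : ℕ) = ∑ x, (I x : ℕ) + ∑ x, (J x : ℕ) ∧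
        ∑ x, (I' x : ℕ) < ∑ x, (I x : ℕ)} := by
  let P := MvPolynomial (Fin p × Fin n) ℂ
  let col : Fin n → Fin p → P := fun x i => X (i, x)
  let d : (Fin p → P) [⋀^Fin p]→ₗ[P] P := Matrix.detRowAlternating
  have hd : ∀ α : Fin p → Fin n, d (fun j => col (α j)) = Dmin p n α := fun α =>
    (Dmin_eq_detRowAlternating α).symm
  let s : Set (Fin p) := Set.Iic a
  let t : Set (Fin p) := Set.Ici a
  let F := d.fixOutside s (fun j => col (J j))
  let G := d.fixOutside t (fun j => col (I j))
  let u : s ⊕ t → Fin n := Sum.elim (fun x => J x) (fun y => I y)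
  let Js : Equiv.Perm (s ⊕ t) → Fin p → Fin n := fun σ i =>
    if h : i ∈ s then u (σ (Sum.inl ⟨i, h⟩)) else J i
  let Is : Equiv.Perm (s ⊕ t) → Fin p → Fin n := fun σ i =>
    if h : i ∈ t then u (σ (Sum.inr ⟨i, h⟩)) else I i
  have hterm : ∀ σ : Equiv.Perm (s ⊕ t), LinearMap.mul' P P
      (AlternatingMap.domCoprod.summand F G (Quotient.mk'' σ) (fun z => col (u z))) =
      Equiv.Perm.sign σ • (Dmin p n (Is σ) * Dmin p n (Js σ)) := by
    intro σ
    rw [AlternatingMap.domCoprod.summand_mk'', ← hd, ← hd, mul_comm]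
    have h₁ : F (fun x => col (u (σ (Sum.inl x)))) = d (fun j => col (Js σ j)) := by
      change d _ = d _
      congr 1
      ext1 i
      by_cases hi : i ∈ s <;> simp [Js, hi]
    have h₂ : G (fun x => col (u (σ (Sum.inr x)))) = d (fun j => col (Is σ j)) := by
      change d _ = d _
      congr 1
      ext1 i
      by_cases hi : i ∈ t <;> simp [Is, hi]
    rw [← h₁, ← h₂]
    rw [_root_.smul_apply, map_zsmul_unit, MultilinearMap.domDomCongr_apply,
      MultilinearMap.domCoprod_apply]
    rfl
  have hzero : ∑ σ : Equiv.Perm.ModSumCongr s t, LinearMap.mul' P P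
      (AlternatingMap.domCoprod.summand F G σ (fun z => col (u z))) = 0 := by
    have hdep : ¬ LinearIndependent P (fun z => col (u z)) := by
      intro hli
      have := hli.fintype_card_le_finrank
      rw [Module.finrank_fin_fun, Fintype.card_sum] at this
      have hs : Fintype.card s = a + 1 := by simp [s]
      have ht : Fintype.card t = p - a := by simp [t]
      omega
    have := (F.domCoprod G).map_linearDependent _ hdep
    rw [AlternatingMap.domCoprod_apply, _root_.sum_apply] at this
    rw [← map_sum, this, map_zero]
  have hone : Is 1 = I ∧ Js 1 = J := by
    constructor
    · ext1 i
      by_cases hi : i ∈ t <;> simp [Is, u, hi]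
    · ext1 i
      by_cases hi : i ∈ s <;> simp [Js, u, hi]
  let q₀ : Equiv.Perm.ModSumCongr s t := Quotient.mk'' 1
  rw [← Finset.add_sum_erase _ _ (Finset.mem_univ q₀), hterm, hone.1, hone.2,
    Equiv.Perm.sign_one, one_smul] at hzero
  rw [eq_neg_of_add_eq_zero_left hzero]
  refine Submodule.neg_mem _ (Submodule.sum_mem _ fun q hq => ?_)
  induction q using Quotient.inductionOn' with | _ σ
  rw [hterm]
  have hmem : Dmin p n (Is σ) * Dmin p n (Js σ) ∈ Submodule.span ℂ
      {f | ∃ I' J' : Fin p → Fin n, f = Dmin p n I' * Dmin p n J' ∧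
        ∑ x, (I' x : ℕ) + ∑ x, (J' x : ℕ) = ∑ x, (I x : ℕ) + ∑ x, (J x : ℕ) ∧
        ∑ x, (I' x : ℕ) < ∑ x, (I x : ℕ)} := by
    have hIs : ∀ τ, ∑ i, (Is τ i : ℕ) = ∑ y : t, (u (τ (Sum.inr y)) : ℕ) +
        ∑ y : {i // i ∉ t}, (I y : ℕ) := by
      intro τ
      rw [← Fintype.sum_subtype_add_sum_subtype (fun i => i ∈ t)]
      congr 1
      · exact Finset.sum_congr (by ext; simp) fun y _ => by simp [Is]
      · exact Finset.sum_congr rfl fun y _ => by simp [Is, y.2]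
    have hJs : ∀ τ, ∑ i, (Js τ i : ℕ) = ∑ y : s, (u (τ (Sum.inl y)) : ℕ) +
        ∑ y : {i // i ∉ s}, (J y : ℕ) := by
      intro τ
      rw [← Fintype.sum_subtype_add_sum_subtype (fun i => i ∈ s)]
      congr 1
      · exact Finset.sum_congr (by ext; simp) fun y _ => by simp [Js]
      · exact Finset.sum_congr rfl fun y _ => by simp [Js, y.2]
    have htot : ∀ τ : Equiv.Perm (s ⊕ t), ∑ y : s, (u (τ (Sum.inl y)) : ℕ) +
        ∑ y : t, (u (τ (Sum.inr y)) : ℕ) = ∑ z, (u z : ℕ) := by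
      intro τ
      rw [← Equiv.sum_comp τ, Fintype.sum_sum_type]
    have hI := hIs 1
    have hJ := hJs 1
    rw [hone.1] at hI
    rw [hone.2] at hJ
    refine Submodule.subset_span ⟨Is σ, Js σ, rfl, ?_, ?_⟩
    · rw [hI, hJ, hIs, hJs]
      have h₁ := htot σ
      have h₂ := htot 1
      omega
    · rw [hI, hIs, Nat.add_lt_add_iff_right]
      have hσ : σ ∉ (Equiv.Perm.sumCongrHom s t).range := by
        intro hσ
        refine (Finset.mem_erase.1 hq).1 (Quotient.sound' ?_)
        rw [QuotientGroup.leftRel_apply]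
        simpa using hσ
      have := mt Equiv.Perm.mem_sumCongrHom_range_of_perm_mapsTo_inl hσ
      simp only [Set.MapsTo, Set.forall_mem_range, not_forall] at this
      obtain ⟨x, hx⟩ := this
      rcases hxy : σ (Sum.inl x) with x' | y
      · exact absurd ⟨x', hxy.symm⟩ hx
      · exact sum_inr_lt_of_perm (fun z => (u z : ℕ)) (fun x y => h x x.2 y y.2) σ hxy
  rcases Int.units_eq_one_or (Equiv.Perm.sign σ) with hs | hs <;> rw [hs]
  · simpa using hmem
  · simpa using hmem

theorem Dmin_eq_zero_of_not_injective {p n : ℕ} {α : Fin p → Fin n}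
    (h : ¬ Function.Injective α) : Dmin p n α = 0 := by
  simp only [Function.Injective, not_forall] at h
  obtain ⟨i, j, hij, hne⟩ := h
  exact Matrix.det_zero_of_column_eq hne fun k => by simp [hij]

theorem Dmin_comp_perm {p n : ℕ} (α : Fin p → Fin n) (σ : Equiv.Perm (Fin p)) :
    Dmin p n (α ∘ σ) = (Equiv.Perm.sign σ : ℤ) • Dmin p n α := by
  rw [Dmin, Dmin, zsmul_eq_mul, ← Matrix.det_permute']
  rfl

/-- Families of `k` increasing columns that form a semistandard tableau. -/
def stdChains (p n k : ℕ) : Set (Fin k → Fin p → Fin n) :=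
  {I | (∀ j, StrictMono (I j)) ∧ Monotone I}

/-- The weighted sum of the entries of a tableau, which increases when large entries are moved
to the right. -/
def tableauWeight {p n k : ℕ} (I : Fin k → Fin p → Fin n) : ℕ :=
  ∑ j : Fin k, (j : ℕ) * ∑ x, (I j x : ℕ)

theorem tableauWeight_le {p n k : ℕ} (I : Fin k → Fin p → Fin n) :
    tableauWeight I ≤ ∑ j : Fin k, (j : ℕ) * (p * n) := by
  refine Finset.sum_le_sum fun j _ => Nat.mul_le_mul_left _ ?_
  refine (Finset.sum_le_card_nsmul _ _ n fun x _ => (I j x).2.le).trans_eq (by simp)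

theorem prod_Dmin_mem_span_stdChains {p n k : ℕ} (I : Fin k → Fin p → Fin n) :
    ∏ j, Dmin p n (I j) ∈
      Submodule.span ℂ ((fun I => ∏ j, Dmin p n (I j)) '' stdChains p n k) := by
  induction hN : (∑ j : Fin k, (j : ℕ) * (p * n)) - tableauWeight I using
    Nat.strong_induction_on generalizing I with | _ N ih
  subst hN
  by_cases hinj : ∀ j, Function.Injective (I j)
  swap
  · push Not at hinj
    obtain ⟨j, hj⟩ := hinj
    rw [Finset.prod_eq_zero (Finset.mem_univ j) (Dmin_eq_zero_of_not_injective hj)]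
    exact zero_mem _
  wlog hmono : ∀ j, StrictMono (I j) generalizing I
  · let K : Fin k → Fin p → Fin n := fun j => I j ∘ Tuple.sort (I j)
    have hw : tableauWeight K = tableauWeight I := by
      refine Finset.sum_congr rfl fun j _ => ?_
      congr 1
      exact Equiv.sum_comp (Tuple.sort (I j)) (fun x => (I j x : ℕ))
    have hK := this K (by rw [hw]; exact ih)
      (fun j => (hinj j).comp (Equiv.injective _))
      (fun j => (Tuple.monotone_sort (I j)).strictMono_of_injective
        ((hinj j).comp (Equiv.injective _)))
    have : ∏ j, Dmin p n (K j) =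
        (∏ j, (Equiv.Perm.sign (Tuple.sort (I j)) : ℤ)) • ∏ j, Dmin p n (I j) := by
      simp only [K, Dmin_comp_perm, zsmul_eq_mul, Finset.prod_mul_distrib, Int.cast_prod]
    rw [this] at hK
    have hu : IsUnit (∏ j, (Equiv.Perm.sign (Tuple.sort (I j)) : ℤ)) :=
      ⟨∏ j, Equiv.Perm.sign (Tuple.sort (I j)), by simp⟩
    rcases Int.isUnit_iff.1 hu with h | h <;> rw [h] at hK
    · simpa using hK
    · simpa using hK
  by_cases hch : Monotone I
  · exact Submodule.subset_span ⟨I, ⟨hmono, hch⟩, rfl⟩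
  simp only [Monotone, not_forall] at hch
  obtain ⟨j, j', hjj', hle⟩ := hch
  simp only [Pi.le_def, not_forall, not_le] at hle
  obtain ⟨a, ha⟩ := hle
  have hlt : j < j' := lt_of_le_of_ne hjj' (by rintro rfl; exact lt_irrefl _ ha)
  have hex := Dmin_mul_mem_span_exchange (I j) (I j') a fun x hx y hy =>
    ((hmono j').monotone hx).trans_lt (ha.trans_le ((hmono j).monotone hy))
  have hsplit : ∀ g : Fin k → MvPolynomial (Fin p × Fin n) ℂ,
      ∏ i, g i = (g j * g j') * ∏ i ∈ (Finset.univ.erase j).erase j', g i := by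
    intro g
    rw [← Finset.mul_prod_erase _ _ (Finset.mem_univ j),
      ← Finset.mul_prod_erase _ _ (Finset.mem_erase.2 ⟨hlt.ne', Finset.mem_univ j'⟩), mul_assoc]
  have hsplit' : ∀ g : Fin k → ℕ,
      ∑ i, g i = (g j + g j') + ∑ i ∈ (Finset.univ.erase j).erase j', g i := by
    intro g
    rw [← Finset.add_sum_erase _ _ (Finset.mem_univ j),
      ← Finset.add_sum_erase _ _ (Finset.mem_erase.2 ⟨hlt.ne', Finset.mem_univ j'⟩), add_assoc]
  rw [hsplit]
  refine Submodule.span_induction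
    (p := fun f _ => f * _ ∈ Submodule.span ℂ _) ?_ ?_ ?_ ?_ hex
  · rintro _ ⟨A, B, rfl, hsum, hlt'⟩
    let K : Fin k → Fin p → Fin n := Function.update (Function.update I j A) j' B
    have hKj : K j = A := by simp [K, hlt.ne]
    have hKj' : K j' = B := by simp [K]
    have hK : ∀ i ∈ (Finset.univ.erase j).erase j', K i = I i := by
      intro i hi
      simp only [Finset.mem_erase] at hi
      simp [K, hi.1, hi.2.1]
    have hmem := ih _ ?_ K rfl
    · rw [hsplit, hKj, hKj'] at hmem
      rwa [Finset.prod_congr rfl fun i hi => by rw [hK i hi]] at hmem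
    · have h₁ := tableauWeight_le K
      have : tableauWeight I < tableauWeight K := by
        have hrest : ∑ i ∈ (Finset.univ.erase j).erase j', (i : ℕ) * ∑ x, (K i x : ℕ) =
            ∑ i ∈ (Finset.univ.erase j).erase j', (i : ℕ) * ∑ x, (I i x : ℕ) :=
          Finset.sum_congr rfl fun i hi => by rw [hK i hi]
        rw [tableauWeight, tableauWeight, hsplit', hsplit', hKj, hKj', hrest]
        refine Nat.add_lt_add_right ?_ _
        have : (j : ℕ) < j' := hlt
        nlinarith
      omega
  · rw [zero_mul]; exact zero_mem _
  · intro x y _ _ hx hy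
    rw [add_mul]; exact add_mem hx hy
  · intro c x _ hx
    rw [smul_mul_assoc]; exact Submodule.smul_mem _ _ hx

/-- The entries of the PBW column whose sequence of suffix maxima is `m`. -/
def pbwEntry (m : ℕ → ℕ) (k : ℕ) : ℕ :=
  if m (k + 1) < m k then m k else k

theorem exists_pbwEntry_eq {p : ℕ} {m : ℕ → ℕ} (hm : Antitone m) (hmp : m p < p) {a : ℕ}
    (hap : a ≤ p) (ha : p ≤ m a) : ∃ b, a ≤ b ∧ b < p ∧ pbwEntry m b = m a := by
  induction hap using Nat.decreasingInduction with
  | self => omega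
  | of_succ a hlt ih =>
    by_cases h : m (a + 1) < m a
    · exact ⟨a, le_rfl, hlt, by simp [pbwEntry, h]⟩
    · have heq : m (a + 1) = m a := le_antisymm (hm (Nat.le_succ a)) (not_lt.1 h)
      obtain ⟨b, hab, hb, hbm⟩ := ih (by omega)
      exact ⟨b, by omega, hb, by omega⟩

theorem pbwEntry_cases {p : ℕ} {m : ℕ → ℕ} (hm : Antitone m) (hmp : m p = p - 1) {k : ℕ}
    (hk : k < p) : (pbwEntry m k = m k ∧ m (k + 1) < m k ∧ p ≤ m k) ∨ pbwEntry m k = k := by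
  have := hm (show k + 1 ≤ p by omega)
  by_cases h : m (k + 1) < m k
  · exact Or.inl ⟨by simp [pbwEntry, h], h, by omega⟩
  · exact Or.inr (by simp [pbwEntry, h])

theorem isPBW_of_pbwEntry {p n : ℕ} {m : ℕ → ℕ} (hm : Antitone m) (hmp : m p = p - 1)
    {α : Fin p → Fin n} (hα : ∀ k, (α k : ℕ) = pbwEntry m k) : IsPBW p n α := by
  have hcases := fun k : Fin p => pbwEntry_cases hm hmp k.2
  simp only [← hα] at hcases
  refine ⟨?_, ?_, ?_⟩
  · refine Function.Injective.of_lt_imp_ne fun k l hkl h => ?_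
    have h' : (α k : ℕ) = α l := by rw [h]
    have := hm (show (k : ℕ) + 1 ≤ l from hkl)
    have hkl' : (k : ℕ) < l := hkl
    rcases hcases k with h₁ | h₁ <;> rcases hcases l with h₂ | h₂ <;> omega
  · intro j hj
    rcases hcases j with h₁ | h₁ <;> omega
  · intro j k hk hjk
    by_contra hlt
    have := hm (show (k : ℕ) ≤ j from not_lt.1 hlt)
    rcases hcases k with h₁ | h₁ <;> rcases hcases j with h₂ | h₂ <;> omega

theorem pbwLeFin_iff_of_pbwEntry {p n : ℕ} {m m' : ℕ → ℕ} (hm : Antitone m)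
    (hmp : m p = p - 1) (hm' : Antitone m') (hmp' : m' p = p - 1)
    {α α' : Fin p → Fin n} (hα : ∀ k, (α k : ℕ) = pbwEntry m k)
    (hα' : ∀ k, (α' k : ℕ) = pbwEntry m' k) :
    pbwLeFin p n α α' ↔ ∀ a < p, m a ≤ m' a := by
  constructor
  · intro h a ha
    have hle := hm' ha.le
    rcases lt_or_ge (m a) p with hlt | hge
    · omega
    · obtain ⟨b, hab, hb, hbm⟩ := exists_pbwEntry_eq hm (by omega) ha.le hge
      obtain ⟨c, hbc, hc⟩ := h ⟨b, hb⟩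
      rw [hα, hα'] at hc
      have hbc' : b ≤ (c : ℕ) := hbc
      have := hm' (hab.trans hbc')
      simp only at hc
      rcases pbwEntry_cases hm' hmp' c.2 with h₂ | h₂ <;> omega
  · intro h a
    have ha := h a a.2
    rcases pbwEntry_cases hm hmp a.2 with h₁ | h₁
    · have ha' : p ≤ m' a := h₁.2.2.trans ha
      have hlt := a.2
      obtain ⟨b, hab, hb, hbm⟩ := exists_pbwEntry_eq hm' (by omega) hlt.le ha'
      exact ⟨⟨b, hb⟩, hab, by rw [hα, hα']; simp only; omega⟩
    · refine ⟨a, le_rfl, ?_⟩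
      rw [hα, hα']
      rcases pbwEntry_cases hm' hmp' a.2 with h₂ | h₂ <;> omega

/-- The suffix maxima of the PBW column corresponding to an increasing column `α`. -/
def suffixMax {p n : ℕ} (α : Fin p → Fin n) (k : ℕ) : ℕ :=
  if h : k < p then (α ⟨p - 1 - k, by omega⟩ : ℕ) + k else p - 1

theorem suffixMax_antitone {p n : ℕ} {α : Fin p → Fin n} (hα : StrictMono α) :
    Antitone (suffixMax α) := by
  refine antitone_nat_of_succ_le fun k => ?_
  unfold suffixMax
  split_ifs with h₁ h₂ h₂
  · have : α ⟨p - 1 - (k + 1), by omega⟩ < α ⟨p - 1 - k, by omega⟩ :=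
      hα (Fin.mk_lt_mk.2 (by omega))
    have : (α ⟨p - 1 - (k + 1), by omega⟩ : ℕ) < α ⟨p - 1 - k, by omega⟩ := this
    omega
  · omega
  · omega
  · exact le_rfl

/-- Increasing columns embed into PBW columns. -/
theorem exists_stdToPBW {p n : ℕ} (hp : 1 ≤ p) (hpn : p < n) :
    ∃ Φ : {α : Fin p → Fin n // StrictMono α} → Fin p → Fin n, (∀ α, IsPBW p n (Φ α)) ∧
      ∀ α β, pbwLeFin p n (Φ α) (Φ β) ↔ α ≤ β := by
  have hmp : ∀ α : Fin p → Fin n, suffixMax α p = p - 1 := fun α => by simp [suffixMax]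
  have hlt : ∀ (α : {α : Fin p → Fin n // StrictMono α}) (k : Fin p),
      pbwEntry (suffixMax α.1) k < n := by
    intro α k
    have h₀ : suffixMax α.1 0 < n := by
      simp [suffixMax, show 0 < p by omega]
    have := suffixMax_antitone α.2 (Nat.zero_le k)
    rcases pbwEntry_cases (suffixMax_antitone α.2) (hmp _) k.2 with h | h <;> omega
  refine ⟨fun α k => ⟨pbwEntry (suffixMax α.1) k, hlt α k⟩,
    fun α => isPBW_of_pbwEntry (suffixMax_antitone α.2) (hmp _) fun _ => rfl, fun α β => ?_⟩
  rw [pbwLeFin_iff_of_pbwEntry (suffixMax_antitone α.2) (hmp _) (suffixMax_antitone β.2) (hmp _)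
    (fun _ => rfl) fun _ => rfl]
  constructor
  · intro h x
    have := h (p - 1 - x) (by omega)
    have hx : (⟨p - 1 - (p - 1 - x), by omega⟩ : Fin p) = x := Fin.ext (by simp only; omega)
    simpa [suffixMax, show p - 1 - (x : ℕ) < p by omega, hx] using this
  · intro h a ha
    have : α.1 ⟨p - 1 - a, by omega⟩ ≤ β.1 ⟨p - 1 - a, by omega⟩ := h _
    simpa [suffixMax, ha] using this

/-- `d` is the exponent of the leading monomial of `f` with respect to the weight `w`, and this
monomial has coefficient one. -/
def IsLeadingExponent {σ Γ : Type*} [AddCommMonoid Γ] [LinearOrder Γ] (w : (σ →₀ ℕ) →+ Γ)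
    (f : MvPolynomial σ ℂ) (d : σ →₀ ℕ) : Prop :=
  coeff d f = 1 ∧ ∀ e, coeff e f ≠ 0 → e ≠ d → w e < w d

section Leading

variable {σ Γ : Type*} [AddCommMonoid Γ] [LinearOrder Γ] {w : (σ →₀ ℕ) →+ Γ}

theorem isLeadingExponent_one : IsLeadingExponent w 1 0 := by
  refine ⟨by simp, fun e he hne => absurd ?_ he⟩
  rw [coeff_one, if_neg hne.symm]

theorem IsLeadingExponent.mul [IsOrderedCancelAddMonoid Γ] {f g : MvPolynomial σ ℂ}
    {d e : σ →₀ ℕ} (hf : IsLeadingExponent w f d) (hg : IsLeadingExponent w g e) :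
    IsLeadingExponent w (f * g) (d + e) := by
  have key : ∀ x y, coeff x f * coeff y g ≠ 0 → (x = d ∧ y = e) ∨ w (x + y) < w (d + e) := by
    intro x y hxy
    have hx := left_ne_zero_of_mul hxy
    have hy := right_ne_zero_of_mul hxy
    rw [map_add, map_add]
    by_cases hxd : x = d
    · by_cases hye : y = e
      · exact Or.inl ⟨hxd, hye⟩
      · exact Or.inr (add_lt_add_of_le_of_lt (by rw [hxd]) (hg.2 y hy hye))
    · refine Or.inr (add_lt_add_of_lt_of_le (hf.2 x hx hxd) ?_)
      by_cases hye : y = e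
      · rw [hye]
      · exact (hg.2 y hy hye).le
  refine ⟨?_, ?_⟩
  · rw [coeff_mul, Finset.sum_eq_single (d, e)]
    · simp [hf.1, hg.1]
    · rintro ⟨x, y⟩ hxy hne
      by_contra h
      rw [Finset.HasAntidiagonal.mem_antidiagonal] at hxy
      rcases key x y h with ⟨rfl, rfl⟩ | hlt
      · exact hne rfl
      · simp only at hxy
        rw [hxy] at hlt
        exact lt_irrefl _ hlt
    · intro h
      simp at h
  · intro z hz hne
    rw [coeff_mul] at hz
    obtain ⟨⟨x, y⟩, hxy, h⟩ := Finset.exists_ne_zero_of_sum_ne_zero hz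
    rw [Finset.HasAntidiagonal.mem_antidiagonal] at hxy
    simp only at hxy
    rcases key x y h with ⟨rfl, rfl⟩ | hlt
    · exact absurd hxy.symm hne
    · rwa [hxy] at hlt

theorem IsLeadingExponent.prod [IsOrderedCancelAddMonoid Γ] {ι : Type*} (s : Finset ι)
    {f : ι → MvPolynomial σ ℂ} {d : ι → σ →₀ ℕ} (h : ∀ i ∈ s, IsLeadingExponent w (f i) (d i)) :
    IsLeadingExponent w (∏ i ∈ s, f i) (∑ i ∈ s, d i) := by
  induction s using Finset.induction_on with
  | empty => simpa using isLeadingExponent_one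
  | insert a s ha ih =>
    rw [Finset.prod_insert ha, Finset.sum_insert ha]
    exact (h a (Finset.mem_insert_self a s)).mul
      (ih fun i hi => h i (Finset.mem_insert_of_mem hi))

theorem linearIndependent_of_isLeadingExponent {T : Type*} {v : T → MvPolynomial σ ℂ}
    {d : T → σ →₀ ℕ} (hd : Function.Injective d) (h : ∀ t, IsLeadingExponent w (v t) (d t)) :
    LinearIndependent ℂ v := by
  rw [linearIndependent_iff]
  intro l hl
  by_contra hne
  obtain ⟨t, ht, hmax⟩ := Finset.exists_max_image l.support (fun s => w (d s))
    (Finsupp.support_nonempty_iff.2 hne)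
  have hc := congrArg (coeff (d t)) hl
  rw [Finsupp.linearCombination_apply, Finsupp.sum, coeff_sum, coeff_zero,
    Finset.sum_eq_single_of_mem t ht] at hc
  · rw [coeff_smul, (h t).1, smul_eq_mul, mul_one] at hc
    exact Finsupp.mem_support_iff.1 ht hc
  · intro s hs hst
    rw [coeff_smul, smul_eq_zero]
    right
    by_contra hcs
    exact absurd ((h s).2 _ hcs fun e => hst (hd e.symm)) (not_lt.2 (hmax s hs))

end Leading

/-- The weight of the variable in position `x` of the `i`-th row. -/
def rowWeight {p n : ℕ} (i : Fin p) (x : Fin n) : ℕ :=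
  if (x : ℕ) = i then n else x

/-- The lexicographic weight of a monomial, with rows compared from top to bottom. -/
def pbwWeight (p n : ℕ) : ((Fin p × Fin n) →₀ ℕ) →+ Lex (Fin p → ℕ) where
  toFun d := toLex fun i => ∑ x, d (i, x) * rowWeight i x
  map_zero' := by
    simp
    rfl
  map_add' d e := by
    rw [← toLex_add]
    congr 1
    ext i
    simp [add_mul, Finset.sum_add_distrib]

/-- The exponent of the diagonal monomial of the minor of a column. -/
def columnExponent {p n : ℕ} (α : Fin p → Fin n) : (Fin p × Fin n) →₀ ℕ :=
  ∑ i, Finsupp.single (i, α i) 1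

theorem columnExponent_apply {p n : ℕ} (α : Fin p → Fin n) (i : Fin p) (x : Fin n) :
    columnExponent α (i, x) = if α i = x then 1 else 0 := by
  rw [columnExponent, Finsupp.finsetSum_apply, Finset.sum_eq_single i]
  · simp [Finsupp.single_apply]
  · intro j _ hj
    simp [hj]
  · simp

theorem pbwWeight_columnExponent {p n : ℕ} (α : Fin p → Fin n) :
    pbwWeight p n (columnExponent α) = toLex fun i => rowWeight i (α i) := by
  change toLex _ = toLex _
  congr 1
  ext i
  simp [columnExponent_apply]

theorem columnExponent_injective {p n : ℕ} :
    Function.Injective (columnExponent : (Fin p → Fin n) → _) := by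
  intro α β h
  ext1 i
  have := DFunLike.congr_fun h (i, β i)
  simpa [columnExponent_apply] using this

theorem Dmin_eq_sum_monomial {p n : ℕ} (α : Fin p → Fin n) :
    Dmin p n α = ∑ σ : Equiv.Perm (Fin p), Equiv.Perm.sign σ •
      monomial (columnExponent (α ∘ σ)) (1 : ℂ) := by
  rw [Dmin, ← Matrix.det_transpose, Matrix.det_apply']
  refine Finset.sum_congr rfl fun σ _ => ?_
  rw [columnExponent, monomial_sum_one, Units.smul_def, zsmul_eq_mul]
  rfl

theorem IsPBW.rowWeight_lt {p n : ℕ} {α : Fin p → Fin n} (hα : IsPBW p n α) {i j : Fin p}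
    (hij : i < j) : rowWeight i (α j) < rowWeight i (α i) := by
  obtain ⟨hinj, hsmall, hdec⟩ := hα
  have hij' : (i : ℕ) < j := hij
  have hne : (α i : ℕ) ≠ α j := fun e => hij.ne (hinj (Fin.ext e))
  have hi := hsmall i
  have hj := hsmall j
  have hd := hdec j i
  have hd' : p ≤ (α i : ℕ) → ¬ (α i : ℕ) < α j := fun h₁ h₂ => absurd (hd h₁ h₂) (not_lt.2 hij.le)
  have := (α j).2
  unfold rowWeight
  split_ifs <;> omega

theorem IsPBW.isLeadingExponent {p n : ℕ} {α : Fin p → Fin n} (hα : IsPBW p n α) :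
    IsLeadingExponent (pbwWeight p n) (Dmin p n α) (columnExponent α) := by
  have hcoeff : ∀ e, coeff e (Dmin p n α) = ∑ σ : Equiv.Perm (Fin p), Equiv.Perm.sign σ •
      if columnExponent (α ∘ σ) = e then (1 : ℂ) else 0 := by
    intro e
    rw [Dmin_eq_sum_monomial, coeff_sum]
    refine Finset.sum_congr rfl fun σ _ => ?_
    rw [← coeff_monomial]
    rcases Int.units_eq_one_or (Equiv.Perm.sign σ) with hs | hs <;> rw [hs]
    · simp only [one_smul]
    · simp only [Units.neg_smul, one_smul, coeff_neg]
  constructor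
  · rw [hcoeff, Finset.sum_eq_single 1]
    · simp
    · intro σ _ hσ
      rw [if_neg, smul_zero]
      intro h
      apply hσ
      ext1 i
      exact hα.1 (congrFun (columnExponent_injective h) i)
    · simp
  · intro e he hne
    rw [hcoeff] at he
    obtain ⟨σ, -, hσ⟩ := Finset.exists_ne_zero_of_sum_ne_zero he
    have heq : columnExponent (α ∘ σ) = e := by
      by_contra h
      simp [h] at hσ
    subst heq
    have hσ1 : ∃ i, σ i ≠ i := by
      by_contra h
      push Not at h
      exact hne (by congr 1; ext1 i; simp [h])
    obtain ⟨i, hi, hmin⟩ := exists_minimal_of_wellFoundedLT (fun i => σ i ≠ i) hσ1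
    have hfix : ∀ j < i, σ j = j := by
      intro j hj
      by_contra h
      exact absurd (hmin h hj.le) (not_le.2 hj)
    rw [pbwWeight_columnExponent, pbwWeight_columnExponent]
    refine ⟨i, fun j hj => ?_, ?_⟩
    · simp [hfix j hj]
    · refine hα.rowWeight_lt (lt_of_le_of_ne (not_lt.1 fun h => ?_) (Ne.symm hi))
      exact hi (σ.injective (hfix _ h))

/-- Families of `k` PBW columns that form a PBW-semistandard tableau. -/
def pbwChains (p n k : ℕ) : Set (Fin k → Fin p → Fin n) :=
  {I | (∀ j, IsPBW p n (I j)) ∧ ∀ i j, i ≤ j → pbwLeFin p n (I i) (I j)}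

/-- If each entry of a row is small or larger than everything to the right of it in the column,
and the resulting suffix maxima are monotone along the row, then the position of the large
entries is determined by their multiplicities. -/
theorem eq_iff_eq_of_card_fiber_eq {k L : ℕ} {m a b : Fin k → ℕ}
    (ha : ∀ j, a j < L ∨ m j < a j) (hb : ∀ j, b j < L ∨ m j < b j)
    (hma : Monotone fun j => max (a j) (m j)) (hmb : Monotone fun j => max (b j) (m j))
    (hcard : ∀ y, (Finset.univ.filter fun j => a j = y).card =
      (Finset.univ.filter fun j => b j = y).card)
    (y : ℕ) (hy : L ≤ y) (j : Fin k) : a j = y ↔ b j = y := by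
  obtain ⟨N, hN⟩ : ∃ N, ∀ j, a j < N ∧ b j < N :=
    ⟨∑ j, (a j + b j) + 1, fun j => by
      have := Finset.single_le_sum (f := fun j => a j + b j) (fun _ _ => Nat.zero_le _)
        (Finset.mem_univ j)
      omega⟩
  induction hd : N - y using Nat.strong_induction_on generalizing y j with | _ d ih
  subst hd
  by_cases hyN : N ≤ y
  · have := hN j
    omega
  have hup : ∀ z, y < z → ∀ j, a j = z ↔ b j = z := fun z hz j =>
    ih (N - z) (by omega) z (by omega) j rfl
  have hsub : ∀ {a b : Fin k → ℕ}, (∀ j, a j < L ∨ m j < a j) →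
      (∀ z, y < z → ∀ j, a j = z ↔ b j = z) →
      (∀ j, y ≤ max (a j) (m j) → y ≤ max (b j) (m j)) → ∀ j, a j = y → b j = y := by
    intro a b ha hup h j hj
    have h₁ := ha j
    have h₂ := h j (by omega)
    have h₃ := hup (b j)
    rcases lt_or_ge y (b j) with hlt | hge
    · have := (h₃ hlt j).2 rfl
      omega
    · omega
  have htot : (∀ j, y ≤ max (a j) (m j) → y ≤ max (b j) (m j)) ∨
      (∀ j, y ≤ max (b j) (m j) → y ≤ max (a j) (m j)) := by
    by_contra! hcon
    obtain ⟨⟨i, hi₁, hi₂⟩, ⟨j, hj₁, hj₂⟩⟩ := hcon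
    rcases le_total i j with hij | hij
    · exact absurd (hi₁.trans (hma hij)) (not_le.2 hj₂)
    · exact absurd (hj₁.trans (hmb hij)) (not_le.2 hi₂)
  have hset : (Finset.univ.filter fun j => a j = y) = Finset.univ.filter fun j => b j = y := by
    rcases htot with h | h
    · refine Finset.eq_of_subset_of_card_le (fun j hj => ?_) (hcard y).ge
      simp only [Finset.mem_filter, Finset.mem_univ, true_and] at hj ⊢
      exact hsub ha hup h j hj
    · refine (Finset.eq_of_subset_of_card_le (fun j hj => ?_) (hcard y).le).symm
      simp only [Finset.mem_filter, Finset.mem_univ, true_and] at hj ⊢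
      exact hsub hb (fun z hz j => (hup z hz j).symm) h j hj
  simpa using Finset.ext_iff.1 hset j

theorem pbwLeFin.sup_Ici_le {p n : ℕ} {α β : Fin p → Fin n} (h : pbwLeFin p n α β) (i : Fin p) :
    (Finset.Ici i).sup (fun l => (α l : ℕ)) ≤ (Finset.Ici i).sup fun l => (β l : ℕ) := by
  refine Finset.sup_le fun l hl => ?_
  obtain ⟨b, hlb, hb⟩ := h l
  exact hb.trans (Finset.le_sup (f := fun l => (β l : ℕ))
    (Finset.mem_Ici.2 ((Finset.mem_Ici.1 hl).trans hlb)))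

theorem IsPBW.lt_or_sup_Ioi_lt {p n : ℕ} {α : Fin p → Fin n} (hα : IsPBW p n α) (i : Fin p) :
    (α i : ℕ) < p ∨ (Finset.Ioi i).sup (fun l => (α l : ℕ)) < α i := by
  rcases lt_or_ge (α i : ℕ) p with h | h
  · exact Or.inl h
  · refine Or.inr ((Finset.sup_lt_iff (by rw [Nat.bot_eq_zero]; have := i.2; omega)).2
      fun l hl => ?_)
    have hil := Finset.mem_Ioi.1 hl
    have hne : (α l : ℕ) ≠ α i := fun e => hil.ne' (hα.1 (Fin.ext e))
    by_contra hlt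
    exact lt_asymm hil (hα.2.2 l i h (by omega))

theorem pbwChains_eq_of_sum_columnExponent_eq {p n k : ℕ} {I J : Fin k → Fin p → Fin n}
    (hI : I ∈ pbwChains p n k) (hJ : J ∈ pbwChains p n k)
    (h : ∑ j, columnExponent (I j) = ∑ j, columnExponent (J j)) : I = J := by
  have hcard : ∀ (i : Fin p) (x : Fin n), (Finset.univ.filter fun j => I j i = x).card =
      (Finset.univ.filter fun j => J j i = x).card := by
    intro i x
    have := DFunLike.congr_fun h (i, x)
    simpa [Finsupp.finsetSum_apply, columnExponent_apply] using this
  have hcard' : ∀ (i : Fin p) (y : ℕ), (Finset.univ.filter fun j => (I j i : ℕ) = y).card =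
      (Finset.univ.filter fun j => (J j i : ℕ) = y).card := by
    intro i y
    by_cases hy : y < n
    · simpa [Fin.ext_iff] using hcard i ⟨y, hy⟩
    · rw [Finset.filter_false_of_mem, Finset.filter_false_of_mem]
      · intro j _; have := (J j i).2; omega
      · intro j _; have := (I j i).2; omega
  have hmax : ∀ {K : Fin k → Fin p → Fin n}, K ∈ pbwChains p n k → ∀ i : Fin p,
      Monotone fun j => max (K j i : ℕ) ((Finset.Ioi i).sup fun l => (K j l : ℕ)) := by
    intro K hK i j j' hjj'
    have := (hK.2 j j' hjj').sup_Ici_le i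
    rwa [← Finset.Ioi_insert, Finset.sup_insert, Finset.sup_insert] at this
  have key : ∀ i : Fin p, ∀ j, I j i = J j i := by
    intro i
    induction i using WellFoundedGT.induction with | ind i ih
    have hm : ∀ j, (Finset.Ioi i).sup (fun l => (I j l : ℕ)) =
        (Finset.Ioi i).sup fun l => (J j l : ℕ) := fun j =>
      Finset.sup_congr rfl fun l hl => by rw [ih l (Finset.mem_Ioi.1 hl) j]
    have hmJ := hmax hJ i
    simp only [← hm] at hmJ
    have := eq_iff_eq_of_card_fiber_eq (L := p)
      (m := fun j => (Finset.Ioi i).sup fun l => (I j l : ℕ))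
      (a := fun j => (I j i : ℕ)) (b := fun j => (J j i : ℕ))
      (fun j => (hI.1 j).lt_or_sup_Ioi_lt i)
      (fun j => by simp only [hm]; exact (hJ.1 j).lt_or_sup_Ioi_lt i)
      (hmax hI i) hmJ (hcard' i)
    intro j
    apply Fin.ext
    have h₁ := this (I j i)
    have h₂ := this (J j i)
    have h₃ := (hI.1 j).2.1 i
    have h₄ := (hJ.1 j).2.1 i
    by_cases hIp : p ≤ (I j i : ℕ)
    · exact ((h₁ hIp j).1 rfl).symm
    · by_cases hJp : p ≤ (J j i : ℕ)
      · exact (h₂ hJp j).2 rfl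
      · rw [h₃ (by omega), h₄ (by omega)]
  ext1 j
  ext1 i
  exact key i j

theorem linearIndependent_prod_Dmin_pbwChains {p n : ℕ} (hp : 1 ≤ p) :
    LinearIndependent ℂ
      (fun T : Σ k, pbwChains p n k => ∏ j, Dmin p n (T.2.1 j)) := by
  refine linearIndependent_of_isLeadingExponent (w := pbwWeight p n)
    (d := fun T => ∑ j, columnExponent (T.2.1 j)) ?_
    fun T => IsLeadingExponent.prod _ fun j _ => (T.2.2.1 j).isLeadingExponent
  rintro ⟨k, I, hI⟩ ⟨l, J, hJ⟩ h
  have hdeg := congrArg Finsupp.degree h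
  simp only [columnExponent, map_sum, Finsupp.degree_single, Finset.sum_const, Finset.card_univ,
    Fintype.card_fin, smul_eq_mul, mul_one] at hdeg
  obtain rfl : k = l := Nat.eq_of_mul_eq_mul_right hp hdeg
  obtain rfl := pbwChains_eq_of_sum_columnExponent_eq hI hJ h
  rfl

theorem card_stdChains_le_card_pbwChains {p n : ℕ} (hp : 1 ≤ p) (hpn : p < n) (k : ℕ) :
    Fintype.card (stdChains p n k) ≤ Fintype.card (pbwChains p n k) := by
  obtain ⟨Φ, hΦ, hle⟩ := exists_stdToPBW hp hpn
  refine Fintype.card_le_of_injective (fun I => ⟨fun j => Φ ⟨I.1 j, I.2.1 j⟩, fun j => hΦ _,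
    fun i j hij => (hle _ _).2 (I.2.2 hij)⟩) ?_
  intro I J h
  have hj : ∀ j, Φ ⟨I.1 j, I.2.1 j⟩ = Φ ⟨J.1 j, J.2.1 j⟩ := fun j =>
    congrFun (congrArg Subtype.val h) j
  have hrefl : ∀ α, pbwLeFin p n α α := fun α a => ⟨a, le_rfl, le_rfl⟩
  apply Subtype.ext
  ext1 j
  exact le_antisymm
    ((hle ⟨I.1 j, I.2.1 j⟩ ⟨J.1 j, J.2.1 j⟩).1 (by rw [hj j]; exact hrefl _))
    ((hle ⟨J.1 j, J.2.1 j⟩ ⟨I.1 j, I.2.1 j⟩).1 (by rw [hj j]; exact hrefl _))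

theorem span_pbwChains_eq_span_stdChains {p n : ℕ} (hp : 1 ≤ p) (hpn : p < n) (k : ℕ) :
    Submodule.span ℂ ((fun I => ∏ j, Dmin p n (I j)) '' pbwChains p n k) =
      Submodule.span ℂ ((fun I => ∏ j, Dmin p n (I j)) '' stdChains p n k) := by
  have hfin : FiniteDimensional ℂ
      (Submodule.span ℂ ((fun I => ∏ j, Dmin p n (I j)) '' stdChains p n k)) :=
    FiniteDimensional.span_of_finite ℂ (Set.toFinite _)
  refine Submodule.eq_of_le_of_finrank_le (Submodule.span_le.2 ?_) ?_
  · rintro _ ⟨I, -, rfl⟩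
    exact prod_Dmin_mem_span_stdChains I
  · have hli : LinearIndependent ℂ (fun I : pbwChains p n k => ∏ j, Dmin p n (I.1 j)) :=
      (linearIndependent_prod_Dmin_pbwChains hp).comp (Sigma.mk k) sigma_mk_injective
    rw [Set.image_eq_range, Set.image_eq_range, finrank_span_eq_card hli]
    exact (finrank_range_le_card _).trans (card_stdChains_le_card_pbwChains hp hpn k)

theorem range_prod_Dmin_pbwChains (p n : ℕ) :
    Set.range (fun T : Σ k, pbwChains p n k => ∏ j, Dmin p n (T.2.1 j)) = pbwProducts p n := by
  ext f
  constructor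
  · rintro ⟨⟨k, I, hI⟩, rfl⟩
    exact ⟨k, I, hI.1, hI.2, rfl⟩
  · rintro ⟨k, I, h₁, h₂, rfl⟩
    exact ⟨⟨k, I, h₁, h₂⟩, rfl⟩

/-- The products `D_{I₁}⋯D_{I_k}` over PBW-semistandard Young
tableaux with columns `I₁,…,I_k` form a ℂ-basis of the Plücker algebra `𝒫`. -/
theorem statement8 (p n : ℕ) (hp : 1 ≤ p) (hpn : p < n) :
    LinearIndependent ℂ
        (fun f : pbwProducts p n => (f : MvPolynomial (Fin p × Fin n) ℂ)) ∧
      Submodule.span ℂ (pbwProducts p n) = Subalgebra.toSubmodule (Pluecker p n) := by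
  rw [Pluecker, Algebra.adjoin_eq_span]
  refine ⟨?_, le_antisymm (Submodule.span_le.2 ?_) (Submodule.span_le.2 ?_)⟩
  · rw [← range_prod_Dmin_pbwChains]
    exact (linearIndependent_prod_Dmin_pbwChains hp).linearIndepOn_id
  · rintro _ ⟨k, I, -, -, rfl⟩
    exact Submodule.subset_span (Submonoid.prod_mem _ fun j _ =>
      Submonoid.subset_closure ⟨I j, rfl⟩)
  · intro f hf
    obtain ⟨l, hl, rfl⟩ := Submonoid.exists_list_of_mem_closure hf
    choose I hI using fun j : Fin l.length => hl (l.get j) (List.get_mem l j)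
    have hprod : l.prod = ∏ j, Dmin p n (I j) := by
      simp only [hI, List.get_eq_getElem, Fin.prod_univ_getElem]
    rw [hprod]
    have := prod_Dmin_mem_span_stdChains I
    rw [← span_pbwChains_eq_span_stdChains hp hpn] at this
    refine Submodule.span_mono ?_ this
    rintro _ ⟨K, hK, rfl⟩
    exact ⟨_, K, hK.1, hK.2, rfl⟩
end
end
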